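/- arXiv:1805.06791 — 2 statements merged into one kernel-verified Lean document; each statement's English description precedes it below -/
import Mathlib

section
/- Let m ≥ 1. There exists C > 1 such that for all p = (z,t) and q = (ζ,τ) in ℝ³ = ℂ×ℝ, C^{-1} δ(p,q) ≤ d(p,q) ≤ C δ(p,q), where δ((z,t),(ζ,τ)) = |z−ζ| + min{ |v|^{1/(2m+2)}, |v|^{1/2}/|z|^m } and v = τ − t + |z|^{2m}(xη − yξ), with z = (x,y), ζ = (ξ,η). -/
/-!
Write `ρ = |z|`. The second summand of `δ` is, up to constants, the inverse at `|v|` of the increasing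
function `h ↦ (ρ + h) ^ (2m) * h ^ 2` (`le_cost`, `cost_le`), so both inequalities reduce to estimates
with this function.

Lower bound. Along a horizontal curve from `p` to `q` of length `L`, `v` is the integral of
`α (|γ| ^ (2m) y_γ - |z| ^ (2m) y) - β (|γ| ^ (2m) x_γ - |z| ^ (2m) x)`. The curve stays within
distance `O(L)` of `z`, so the mean value inequality gives `|v| ≤ C (ρ + L) ^ (2m) L ^ 2`
(`HorJoined.bounds`), hence `δ ≤ C L`.

Upper bound. The polar rectangle with radii `ρ` and `ρ + h` and angle `φ` lifts to a horizontal curve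
which returns to `z` and changes the height by `-((ρ + h) ^ (2m+2) - ρ ^ (2m+2)) φ`. With `h` equal
to the second summand of the gauge at `w`, and the appropriate `φ`, it moves `p` vertically by `w` with
length at most `5 h` (`joined_loop`). Following it with the lift of the segment from `z` to `ζ` reaches
`q` for `w = v - v_seg`, where `v_seg` is the value of `v` for the lifted segment. The lower-bound
estimate applied to that segment bounds `v_seg`, and the total length is `O(δ)` (`exists_joined`).
-/

open MeasureTheory Set

noncomputable section

/-- Euclidean norm on ℝ². -/
def nrm (z : ℝ × ℝ) : ℝ := Real.sqrt (z.1 ^ 2 + z.2 ^ 2)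

/-- `|z|^(2m)` for a real parameter `m`. -/
def w2m (m : ℝ) (z : ℝ × ℝ) : ℝ := (z.1 ^ 2 + z.2 ^ 2) ^ m

/-- The vector field `X = ∂ₓ + |z|^(2m) y ∂_t` on ℝ³. -/
def Xvf (m : ℝ) (p : ℝ × ℝ × ℝ) : ℝ × ℝ × ℝ := (1, 0, w2m m (p.1, p.2.1) * p.2.1)

/-- The vector field `Y = ∂_y − |z|^(2m) x ∂_t` on ℝ³. -/
def Yvf (m : ℝ) (p : ℝ × ℝ × ℝ) : ℝ × ℝ × ℝ := (0, 1, -(w2m m (p.1, p.2.1) * p.1))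

/-- `γ` is an (absolutely continuous) horizontal curve on `[0, T]` with controls `α, β`. -/
def IsHorizontal (m : ℝ) (γ : ℝ → ℝ × ℝ × ℝ) (α β : ℝ → ℝ) (T : ℝ) : Prop :=
  ∀ t ∈ Icc (0 : ℝ) T,
    γ t = γ 0 + ∫ s in (0 : ℝ)..t, (α s • Xvf m (γ s) + β s • Yvf m (γ s))

/-- Length of a horizontal curve with controls `α, β` on `[0, T]`. -/
def ccLength (α β : ℝ → ℝ) (T : ℝ) : ℝ := ∫ s in (0 : ℝ)..T, Real.sqrt (α s ^ 2 + β s ^ 2)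

/-- The Carnot–Carathéodory distance associated with `X` and `Y`. -/
def ccDist (m : ℝ) (p q : ℝ × ℝ × ℝ) : ℝ :=
  sInf { L : ℝ | ∃ T, 0 ≤ T ∧ ∃ γ α β, IsHorizontal m γ α β T ∧
    γ 0 = p ∧ γ T = q ∧ L = ccLength α β T }

/-- The gauge `δ((z,t),(ζ,τ)) = |z−ζ| + min{|v|^(1/(2m+2)), |v|^(1/2)/|z|^m}`,
`v = τ − t + |z|^(2m)(xη − yξ)`; for `z = 0` the minimum is `|v|^(1/(2m+2))`. -/
noncomputable def dlt (m : ℝ) (p q : ℝ × ℝ × ℝ) : ℝ :=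
  let z : ℝ × ℝ := (p.1, p.2.1)
  let ζ : ℝ × ℝ := (q.1, q.2.1)
  let v : ℝ := q.2.2 - p.2.2 + w2m m z * (z.1 * ζ.2 - z.2 * ζ.1)
  nrm (z - ζ) +
    (if z = 0 then |v| ^ (1 / (2 * m + 2))
     else min (|v| ^ (1 / (2 * m + 2))) (|v| ^ ((1 : ℝ) / 2) / nrm z ^ m))

/-- The velocity `α X + β Y` along the curve `γ`. -/
def velo (m : ℝ) (γ : ℝ → ℝ × ℝ × ℝ) (α β : ℝ → ℝ) (s : ℝ) : ℝ × ℝ × ℝ :=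
  α s • Xvf m (γ s) + β s • Yvf m (γ s)

/-- `p` and `q` are joined by a horizontal curve of length `L` whose velocity is integrable.
`IsHorizontal` alone does not ask for integrability; this matters only for `p = q`, because a
non-integrable velocity has integral `0`, which forces `γ T = γ 0`. -/
def HorJoined (m : ℝ) (p q : ℝ × ℝ × ℝ) (L : ℝ) : Prop :=
  ∃ T, 0 ≤ T ∧ ∃ γ α β, IsHorizontal m γ α β T ∧
    IntervalIntegrable (velo m γ α β) volume 0 T ∧
    γ 0 = p ∧ γ T = q ∧ L = ccLength α β T

/-- The second summand of the gauge, as a function of `ρ = |z|` and `v`. It is comparable to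
the solution `h` of `(ρ + h) ^ (2 * m) * h ^ 2 = |v|`; see `le_cost` and `cost_le`. -/
def cost (m ρ v : ℝ) : ℝ :=
  if ρ = 0 then |v| ^ (1 / (2 * m + 2))
  else min (|v| ^ (1 / (2 * m + 2))) (|v| ^ ((1 : ℝ) / 2) / ρ ^ m)

/-- The quantity `v` of the gauge. -/
def vof (m : ℝ) (p q : ℝ × ℝ × ℝ) : ℝ :=
  q.2.2 - p.2.2 + w2m m (p.1, p.2.1) * (p.1 * q.2.1 - p.2.1 * q.1)

/-! ### The gauge -/

lemma nrm_nonneg (z : ℝ × ℝ) : 0 ≤ nrm z := Real.sqrt_nonneg _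

lemma nrm_sq (z : ℝ × ℝ) : nrm z ^ 2 = z.1 ^ 2 + z.2 ^ 2 := Real.sq_sqrt (by positivity)

lemma nrm_eq_zero {z : ℝ × ℝ} : nrm z = 0 ↔ z = 0 := by
  rw [nrm, Real.sqrt_eq_zero (by positivity), Prod.ext_iff]
  constructor
  · intro h
    constructor
    · exact pow_eq_zero_iff (two_ne_zero) |>.1 (by nlinarith [sq_nonneg z.1, sq_nonneg z.2])
    · exact pow_eq_zero_iff (two_ne_zero) |>.1 (by nlinarith [sq_nonneg z.1, sq_nonneg z.2])
  · rintro ⟨h1, h2⟩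
    simp [h1, h2]

lemma w2m_eq (m : ℝ) (z : ℝ × ℝ) : w2m m z = nrm z ^ (2 * m) := by
  rw [w2m, ← nrm_sq, Real.rpow_mul (nrm_nonneg z)]; norm_num

lemma dlt_eq (m : ℝ) (p q : ℝ × ℝ × ℝ) :
    dlt m p q = nrm ((p.1, p.2.1) - (q.1, q.2.1)) + cost m (nrm (p.1, p.2.1)) (vof m p q) := by
  unfold dlt cost vof
  simp only [nrm_eq_zero]

lemma rpow_split {a : ℝ} (ha : 0 ≤ a) {k : ℝ} (hk : 0 ≤ k) : a ^ (k + 2) = a ^ k * a ^ 2 := by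
  rw [Real.rpow_add_of_nonneg ha hk (by norm_num)]; norm_num

/-- The two regimes of the minimum: `cost` is `|v| ^ (1 / (2m+2))` when this is at least `ρ`, and
`|v| ^ (1 / 2) / ρ ^ m` otherwise. -/
lemma cost_spec {m : ℝ} (hm : 1 ≤ m) {ρ : ℝ} (hρ : 0 ≤ ρ) (v : ℝ) :
    0 ≤ cost m ρ v ∧ ((cost m ρ v ^ (2 * m + 2) = |v| ∧ ρ ≤ cost m ρ v) ∨
      (ρ ^ (2 * m) * cost m ρ v ^ 2 = |v| ∧ cost m ρ v ≤ ρ)) := by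
  set s := |v| ^ (1 / (2 * m + 2)) with hs
  have hv := abs_nonneg v
  have hs0 : 0 ≤ s := Real.rpow_nonneg hv _
  have hsv : s ^ (2 * m + 2) = |v| := by
    rw [hs, one_div, Real.rpow_inv_rpow hv (by positivity)]
  rcases eq_or_lt_of_le hρ with h0 | hpos
  · have : cost m ρ v = s := by simp [cost, ← h0, hs]
    rw [this]
    exact ⟨hs0, Or.inl ⟨hsv, by rw [← h0]; exact hs0⟩⟩
  · have hc : cost m ρ v = min s (|v| ^ ((1 : ℝ) / 2) / ρ ^ m) := by simp [cost, hpos.ne', hs]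
    have hh : |v| ^ ((1 : ℝ) / 2) = s ^ m * s := by
      rw [← hsv, ← Real.rpow_mul hs0, ← Real.rpow_add_one' hs0 (by positivity)]
      congr 1; ring
    have hρm : 0 < ρ ^ m := Real.rpow_pos_of_pos hpos m
    rw [hh] at hc
    rcases le_total ρ s with h | h
    · have hle : ρ ^ m ≤ s ^ m := Real.rpow_le_rpow hρ h (by linarith)
      have : cost m ρ v = s := by
        rw [hc, min_eq_left]
        rw [le_div_iff₀ hρm, mul_comm]
        exact mul_le_mul_of_nonneg_right hle hs0
      rw [this]
      exact ⟨hs0, Or.inl ⟨hsv, h⟩⟩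
    · have hle : s ^ m ≤ ρ ^ m := Real.rpow_le_rpow hs0 h (by linarith)
      have hcs : s ^ m * s / ρ ^ m ≤ s := by
        rw [div_le_iff₀ hρm, mul_comm s]
        exact mul_le_mul_of_nonneg_right hle hs0
      rw [hc, min_eq_right hcs]
      refine ⟨by positivity, Or.inr ⟨?_, hcs.trans h⟩⟩
      have e1 : ∀ a : ℝ, 0 ≤ a → a ^ (2 * m) = (a ^ m) ^ 2 := by
        intro a ha
        rw [mul_comm, Real.rpow_mul ha]; norm_num
      rw [← hsv, rpow_split hs0 (by positivity), e1 ρ hρ, e1 s hs0]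
      field_simp

/-- Together with `le_cost`, this replaces the minimum by the increasing function
`h ↦ (ρ + h) ^ (2 * m) * h ^ 2`, up to a constant; quasi-subadditivity of `cost` in `v` follows. -/
lemma cost_le {m : ℝ} (hm : 1 ≤ m) {ρ h A v : ℝ} (hρ : 0 ≤ ρ) (hh : 0 ≤ h) (hA : 1 ≤ A)
    (hv : |v| ≤ A * ((ρ + h) ^ (2 * m) * h ^ 2)) : cost m ρ v ≤ A * 2 ^ m * h := by
  have h2m : (2 : ℝ) ≤ 2 ^ m := by
    simpa using Real.rpow_le_rpow_of_exponent_le (by norm_num : (1 : ℝ) ≤ 2) hm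
  have h22 : (2 : ℝ) ^ (2 * m) = (2 ^ m) ^ 2 := by
    rw [mul_comm, Real.rpow_mul (by norm_num)]; norm_num
  have big : (A * 2 ^ m * h) ^ 2 = A ^ 2 * (2 : ℝ) ^ (2 * m) * h ^ 2 := by rw [h22]; ring
  obtain ⟨c0, hc⟩ := cost_spec hm hρ v
  set c := cost m ρ v
  by_contra! hlt
  have hhc : h < c := by
    refine lt_of_le_of_lt ?_ hlt
    nlinarith [mul_le_mul hA h2m (by norm_num) (by linarith)]
  have hcpos : 0 < c := by linarith
  have hsq : (A * 2 ^ m * h) ^ 2 < c ^ 2 := by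
    apply pow_lt_pow_left₀ hlt (by positivity) (by norm_num)
  have hAA : A ≤ A ^ 2 := by nlinarith
  have key : ∀ b, 0 < b → ρ + h ≤ 2 * b → |v| < b ^ (2 * m) * c ^ 2 := by
    intro b hb hle
    have h1 : (ρ + h) ^ (2 * m) ≤ 2 ^ (2 * m) * b ^ (2 * m) := by
      rw [← Real.mul_rpow (by norm_num) hb.le]
      exact Real.rpow_le_rpow (by positivity) hle (by linarith)
    have hbp : 0 < b ^ (2 * m) := Real.rpow_pos_of_pos hb _
    calc |v| ≤ A * ((ρ + h) ^ (2 * m) * h ^ 2) := hv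
      _ ≤ A ^ 2 * ((2 ^ (2 * m) * b ^ (2 * m)) * h ^ 2) := by gcongr
      _ = b ^ (2 * m) * (A * 2 ^ m * h) ^ 2 := by rw [big]; ring
      _ < _ := by gcongr
  rcases hc with ⟨h1, h2⟩ | ⟨h1, h2⟩
  · have := key c hcpos (by linarith)
    rw [← h1, rpow_split c0 (by linarith)] at this
    exact lt_irrefl _ this
  · have := key ρ (by linarith) (by linarith)
    rw [← h1] at this
    exact lt_irrefl _ this

lemma le_cost {m : ℝ} (hm : 1 ≤ m) {ρ : ℝ} (hρ : 0 ≤ ρ) (v : ℝ) :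
    |v| ≤ (ρ + cost m ρ v) ^ (2 * m) * cost m ρ v ^ 2 := by
  obtain ⟨c0, ⟨h1, h2⟩ | ⟨h1, h2⟩⟩ := cost_spec hm hρ v
  · rw [← h1, rpow_split c0 (by linarith)]
    generalize cost m ρ v = c at *
    gcongr
    linarith
  · rw [← h1]
    generalize cost m ρ v = c at *
    gcongr
    linarith

/-- The angle `φ = |w| / ((ρ + c) ^ (2m+2) - ρ ^ (2m+2))` needed by the loop in `joined_loop`, with
`c = cost m ρ w`, is small enough for its two arcs to have total length at most `3 * c`. -/
lemma loop_bound {m : ℝ} (hm : 1 ≤ m) {ρ : ℝ} (hρ : 0 ≤ ρ) (w : ℝ) :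
    (2 * ρ + cost m ρ w) * |w| ≤
      3 * cost m ρ w * ((ρ + cost m ρ w) ^ (2 * m + 2) - ρ ^ (2 * m + 2)) := by
  obtain ⟨c0, ⟨h1, h2⟩ | ⟨h1, h2⟩⟩ := cost_spec hm hρ w
  · generalize cost m ρ w = c at *
    have := Real.add_rpow_le_rpow_add hρ c0 (by linarith : 1 ≤ 2 * m + 2)
    have hw := abs_nonneg w
    apply mul_le_mul <;> linarith
  · generalize cost m ρ w = c at *
    have e : (ρ + c) ^ (2 * m + 2) - ρ ^ (2 * m + 2) ≥ ρ ^ (2 * m) * (ρ * c) := by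
      rw [rpow_split hρ (by linarith), rpow_split (by positivity) (by linarith)]
      have : ρ ^ (2 * m) ≤ (ρ + c) ^ (2 * m) :=
        Real.rpow_le_rpow hρ (by linarith) (by linarith)
      have h0 : 0 ≤ ρ ^ (2 * m) := by positivity
      nlinarith [mul_le_mul_of_nonneg_right this (sq_nonneg (ρ + c)), mul_nonneg h0 (mul_nonneg hρ c0),
        mul_nonneg h0 (sq_nonneg c)]
    rw [← h1]
    have h0 : 0 ≤ ρ ^ (2 * m) := by positivity
    calc (2 * ρ + c) * (ρ ^ (2 * m) * c ^ 2) ≤ (3 * ρ) * (ρ ^ (2 * m) * c ^ 2) := by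
          gcongr; linarith
      _ = 3 * c * (ρ ^ (2 * m) * (ρ * c)) := by ring
      _ ≤ _ := by gcongr

/-! ### Horizontal curves: segments, arcs, concatenation, loops -/

lemma w2m_continuous {m : ℝ} (hm : 1 ≤ m) : Continuous (w2m m) := by
  unfold w2m
  exact (by fun_prop : Continuous fun z : ℝ × ℝ => z.1 ^ 2 + z.2 ^ 2).rpow_const
    (fun _ => Or.inr (by linarith))

/-- Horizontal lift of a `C¹` plane curve of constant speed `l`. -/
lemma joined_of_smooth {m : ℝ} (hm : 1 ≤ m) {x y x' y' : ℝ → ℝ} (hx : ∀ s, HasDerivAt x (x' s) s)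
    (hy : ∀ s, HasDerivAt y (y' s) s) (cx : Continuous x') (cy : Continuous y') {l : ℝ}
    (hl : ∀ s, Real.sqrt (x' s ^ 2 + y' s ^ 2) = l) (t : ℝ) :
    HorJoined m (x 0, y 0, t)
      (x 1, y 1, t + ∫ s in (0 : ℝ)..1, w2m m (x s, y s) * (x' s * y s - y' s * x s)) l := by
  have cx0 : Continuous x := continuous_iff_continuousAt.2 fun s => (hx s).continuousAt
  have cy0 : Continuous y := continuous_iff_continuousAt.2 fun s => (hy s).continuousAt
  have cw := w2m_continuous hm
  set g : ℝ → ℝ := fun s => w2m m (x s, y s) * (x' s * y s - y' s * x s) with hg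
  have cg : Continuous g := by fun_prop
  set γ : ℝ → ℝ × ℝ × ℝ := fun r => (x r, y r, t + ∫ s in (0 : ℝ)..r, g s) with hγ
  have hv : velo m γ x' y' = fun s => (x' s, y' s, g s) := by
    funext s
    simp only [velo, Xvf, Yvf, hγ, hg]
    ext <;> simp
    ring
  have hd : ∀ s, HasDerivAt γ (velo m γ x' y' s) s := by
    intro s
    rw [hv]
    exact (hx s).prodMk ((hy s).prodMk ((cg.integral_hasStrictDerivAt 0 s).hasDerivAt.const_add t))
  have cv : Continuous (velo m γ x' y') := by rw [hv]; fun_prop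
  refine ⟨1, zero_le_one, γ, x', y', ?_, cv.intervalIntegrable _ _, by simp [hγ], rfl, ?_⟩
  · intro r _
    have := intervalIntegral.integral_eq_sub_of_hasDerivAt (fun s _ => hd s)
      (cv.intervalIntegrable 0 r)
    change γ r = γ 0 + ∫ s in (0 : ℝ)..r, velo m γ x' y' s
    rw [this]; abel
  · simp [ccLength, hl]

/-- The lift of a straight segment; the height gained, `c`, does not depend on the starting
height. -/
lemma joined_segment {m : ℝ} (hm : 1 ≤ m) (z ζ : ℝ × ℝ) :
    ∃ c, ∀ t, HorJoined m (z.1, z.2, t) (ζ.1, ζ.2, t + c) (nrm (z - ζ)) := by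
  refine ⟨∫ s in (0 : ℝ)..1, w2m m (z.1 + s * (ζ.1 - z.1), z.2 + s * (ζ.2 - z.2)) *
    ((ζ.1 - z.1) * (z.2 + s * (ζ.2 - z.2)) - (ζ.2 - z.2) * (z.1 + s * (ζ.1 - z.1))),
    fun t => ?_⟩
  have h : ∀ a b s : ℝ, HasDerivAt (fun s => a + s * (b - a)) (b - a) s := by
    intro a b s
    simpa using ((hasDerivAt_id s).mul_const (b - a)).const_add a
  have := joined_of_smooth hm (h z.1 ζ.1) (h z.2 ζ.2) continuous_const continuous_const
    (l := nrm (z - ζ)) (fun s => by simp only [nrm, Prod.fst_sub, Prod.snd_sub]; congr 1; ring) t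
  simpa using this

lemma w2m_polar (m : ℝ) {ρ : ℝ} (hρ : 0 ≤ ρ) (θ : ℝ) :
    w2m m (ρ * Real.cos θ, ρ * Real.sin θ) = ρ ^ (2 * m) := by
  rw [w2m_eq, nrm]
  congr 1
  rw [Real.sqrt_eq_iff_mul_self_eq (by positivity) hρ]
  simp only
  linear_combination (ρ ^ 2) * Real.sin_sq_add_cos_sq θ

/-- Radial motion does not change the height. -/
lemma joined_radial {m : ℝ} (hm : 1 ≤ m) (ρ ρ' θ t : ℝ) :
    HorJoined m (ρ * Real.cos θ, ρ * Real.sin θ, t) (ρ' * Real.cos θ, ρ' * Real.sin θ, t)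
      |ρ' - ρ| := by
  have h : ∀ a s : ℝ, HasDerivAt (fun s => (ρ + s * (ρ' - ρ)) * a) ((ρ' - ρ) * a) s := by
    intro a s
    simpa using (((hasDerivAt_id s).mul_const (ρ' - ρ)).const_add ρ).mul_const a
  have := joined_of_smooth hm (h (Real.cos θ)) (h (Real.sin θ)) continuous_const continuous_const
    (l := |ρ' - ρ|) (fun s => by
      rw [← Real.sqrt_sq_eq_abs]; congr 1
      linear_combination ((ρ' - ρ) ^ 2) * Real.sin_sq_add_cos_sq θ) t
  have e : ∀ s : ℝ, (ρ' - ρ) * Real.cos θ * ((ρ + s * (ρ' - ρ)) * Real.sin θ) -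
      (ρ' - ρ) * Real.sin θ * ((ρ + s * (ρ' - ρ)) * Real.cos θ) = 0 := fun s => by ring
  simpa [e] using this

/-- Rotation by the signed angle `φ` on the circle of radius `ρ`: since `y dx - x dy = -ρ² dθ`, the
height changes by `-ρ ^ (2m+2) * φ`. -/
lemma joined_arc {m : ℝ} (hm : 1 ≤ m) {ρ : ℝ} (hρ : 0 ≤ ρ) (θ φ t : ℝ) :
    HorJoined m (ρ * Real.cos θ, ρ * Real.sin θ, t)
      (ρ * Real.cos (θ + φ), ρ * Real.sin (θ + φ), t - ρ ^ (2 * m + 2) * φ) (ρ * |φ|) := by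
  have ha : ∀ s : ℝ, HasDerivAt (fun s => θ + s * φ) φ s := by
    intro s
    simpa using ((hasDerivAt_id s).mul_const φ).const_add θ
  have := joined_of_smooth hm (fun s => ((ha s).cos).const_mul ρ)
    (fun s => ((ha s).sin).const_mul ρ) (by fun_prop) (by fun_prop)
    (l := ρ * |φ|) (fun s => by
      rw [show ρ * |φ| = |ρ * φ| by rw [abs_mul, abs_of_nonneg hρ], ← Real.sqrt_sq_eq_abs]
      congr 1
      linear_combination (ρ ^ 2 * φ ^ 2) * Real.sin_sq_add_cos_sq (θ + s * φ)) t
  have e : ∀ s : ℝ, w2m m (ρ * Real.cos (θ + s * φ), ρ * Real.sin (θ + s * φ)) *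
      (ρ * (-Real.sin (θ + s * φ) * φ) * (ρ * Real.sin (θ + s * φ)) -
      ρ * (Real.cos (θ + s * φ) * φ) * (ρ * Real.cos (θ + s * φ))) = -(ρ ^ (2 * m + 2) * φ) := by
    intro s
    rw [w2m_polar m hρ, rpow_split hρ (by linarith)]
    linear_combination (-ρ ^ (2 * m) * ρ ^ 2 * φ) * Real.sin_sq_add_cos_sq (θ + s * φ)
  simp only [e] at this
  simpa [sub_eq_add_neg] using this

lemma speed_integrable {m T : ℝ} {γ : ℝ → ℝ × ℝ × ℝ} {α β : ℝ → ℝ}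
    (hi : IntervalIntegrable (velo m γ α β) volume 0 T) :
    IntervalIntegrable α volume 0 T ∧ IntervalIntegrable β volume 0 T ∧
    IntervalIntegrable (fun s => Real.sqrt (α s ^ 2 + β s ^ 2)) volume 0 T := by
  have key : ∀ F : (ℝ × ℝ × ℝ) →L[ℝ] ℝ,
      IntervalIntegrable (fun s => F (velo m γ α β s)) volume 0 T := by
    intro F
    exact ⟨F.integrable_comp hi.1, F.integrable_comp hi.2⟩
  have hα : IntervalIntegrable α volume 0 T := by
    have := key (ContinuousLinearMap.fst ℝ ℝ (ℝ × ℝ))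
    simpa [velo, Xvf, Yvf] using this
  have hβ : IntervalIntegrable β volume 0 T := by
    have := key ((ContinuousLinearMap.fst ℝ ℝ ℝ).comp (ContinuousLinearMap.snd ℝ ℝ (ℝ × ℝ)))
    simpa [velo, Xvf, Yvf] using this
  refine ⟨hα, hβ, ?_⟩
  refine (hα.norm.add hβ.norm).mono_fun ?_ ?_
  · exact (Real.continuous_sqrt.comp_aestronglyMeasurable
      ((hα.def'.aestronglyMeasurable.pow 2).add (hβ.def'.aestronglyMeasurable.pow 2)))
  · refine Filter.Eventually.of_forall fun s => ?_
    simp only [Real.norm_eq_abs]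
    rw [abs_of_nonneg (Real.sqrt_nonneg _), abs_of_nonneg (by positivity)]
    rw [Real.sqrt_le_left (by positivity)]
    nlinarith [abs_nonneg (α s), abs_nonneg (β s), sq_abs (α s), sq_abs (β s),
      mul_nonneg (abs_nonneg (α s)) (abs_nonneg (β s))]

lemma HorJoined.trans {m : ℝ} {p q r : ℝ × ℝ × ℝ} {L M : ℝ} (h1 : HorJoined m p q L)
    (h2 : HorJoined m q r M) : HorJoined m p r (L + M) := by
  obtain ⟨S, hS, γ, α, β, hh, hi, h0, hT, hL⟩ := h1
  obtain ⟨T, hT0, γ', α', β', hh', hi', h0', hT', hL'⟩ := h2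
  -- The second curve is run after the first, shifted in time by `S`.
  set γ'' : ℝ → ℝ × ℝ × ℝ := fun s => if s ≤ S then γ s else γ' (s - S) with hγ
  set α'' : ℝ → ℝ := fun s => if s ≤ S then α s else α' (s - S) with hα
  set β'' : ℝ → ℝ := fun s => if s ≤ S then β s else β' (s - S) with hβ
  have e1 : ∀ t ≤ S, EqOn (velo m γ'' α'' β'') (velo m γ α β) (uIoc 0 t ∩ Iic S) := by
    intro t ht s hs
    have : s ≤ S := hs.2
    simp only [velo, hγ, hα, hβ, this, if_true]
  have e2 : EqOn (velo m γ'' α'' β'') (fun s => velo m γ' α' β' (s - S)) (Ioi S) := by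
    intro s hs
    have : ¬ s ≤ S := not_le.2 hs
    simp only [velo, hγ, hα, hβ, this, if_false]
  have sub1 : ∀ t, 0 ≤ t → t ≤ S → EqOn (velo m γ'' α'' β'') (velo m γ α β) (uIoc 0 t) := by
    intro t h0 ht s hs
    rw [uIoc_of_le h0] at hs
    exact e1 t ht ⟨by rwa [uIoc_of_le h0], hs.2.trans ht⟩
  have sub2 : ∀ t, S ≤ t →
      EqOn (velo m γ'' α'' β'') (fun s => velo m γ' α' β' (s - S)) (uIoc S t) := by
    intro t ht s hs
    rw [uIoc_of_le ht] at hs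
    exact e2 hs.1
  have i1 : IntervalIntegrable (velo m γ'' α'' β'') volume 0 S :=
    hi.congr (sub1 S hS le_rfl).symm
  have i2' : IntervalIntegrable (fun s => velo m γ' α' β' (s - S)) volume S (S + T) := by
    have := hi'.comp_sub_right S
    simpa [add_comm] using this
  have i2 : IntervalIntegrable (velo m γ'' α'' β'') volume S (S + T) :=
    i2'.congr (sub2 _ (by linarith)).symm
  refine ⟨S + T, by linarith, γ'', α'', β'', ?_, i1.trans i2, by simp [hγ, hS, h0], ?_, ?_⟩
  · intro t ht
    have g0 : γ'' 0 = γ 0 := by simp [hγ, hS]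
    change γ'' t = γ'' 0 + ∫ s in (0 : ℝ)..t, velo m γ'' α'' β'' s
    rw [g0]
    rcases le_or_gt t S with h | h
    · rw [intervalIntegral.integral_congr_ae
        (Filter.Eventually.of_forall fun s hs => sub1 t ht.1 h hs)]
      have : γ'' t = γ t := by simp [hγ, h]
      rw [this]
      exact hh t ⟨ht.1, h⟩
    · have : γ'' t = γ' (t - S) := by simp [hγ, not_le.2 h]
      have hA : γ S = γ 0 + ∫ s in (0 : ℝ)..S, velo m γ α β s := hh S ⟨hS, le_rfl⟩
      have hB : γ' (t - S) = γ' 0 + ∫ s in (0 : ℝ)..(t - S), velo m γ' α' β' s :=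
        hh' (t - S) ⟨by linarith, by linarith [ht.2]⟩
      have i3 : IntervalIntegrable (velo m γ'' α'' β'') volume S t :=
        i2.mono_set (by
          rw [uIcc_of_le h.le, uIcc_of_le (by linarith)]
          exact Icc_subset_Icc_right ht.2)
      rw [this, ← intervalIntegral.integral_add_adjacent_intervals i1 i3,
        intervalIntegral.integral_congr_ae
        (Filter.Eventually.of_forall fun s hs => sub1 S hS le_rfl hs),
        intervalIntegral.integral_congr_ae
        (Filter.Eventually.of_forall fun s hs => sub2 t h.le hs),
        intervalIntegral.integral_comp_sub_right (fun s => velo m γ' α' β' s), sub_self, ← add_assoc,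
        ← hA, hT, ← h0', hB]
  · rcases eq_or_lt_of_le hT0 with h | h
    · have : γ'' (S + T) = γ S := by simp [hγ, ← h]
      rw [this, hT, ← hT', ← h, h0']
    · have : γ'' (S + T) = γ' T := by simp [hγ, h]
      rw [this, hT']
  · have j1 := (speed_integrable i1).2.2
    have j2 : IntervalIntegrable (fun s => Real.sqrt (α'' s ^ 2 + β'' s ^ 2)) volume S (S + T) := by
      have := (speed_integrable (i1.trans i2)).2.2
      exact this.mono_set (by
        rw [uIcc_of_le (by linarith), uIcc_of_le (by linarith)]
        exact Icc_subset_Icc_left hS)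
    rw [hL, hL', ccLength, ccLength, ccLength,
      ← intervalIntegral.integral_add_adjacent_intervals j1 j2]
    congr 1
    · refine intervalIntegral.integral_congr_ae (Filter.Eventually.of_forall fun s hs => ?_)
      rw [uIoc_of_le hS] at hs
      simp [hα, hβ, hs.2]
    · have : ∫ s in (0 : ℝ)..T, Real.sqrt (α' s ^ 2 + β' s ^ 2) =
          ∫ s in S..(S + T), Real.sqrt (α' (s - S) ^ 2 + β' (s - S) ^ 2) := by
        rw [intervalIntegral.integral_comp_sub_right
          (fun s => Real.sqrt (α' s ^ 2 + β' s ^ 2))]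
        simp
      rw [this]
      refine intervalIntegral.integral_congr_ae (Filter.Eventually.of_forall fun s hs => ?_)
      rw [uIoc_of_le (by linarith)] at hs
      simp [hα, hβ, not_le.2 hs.1]

lemma nrm_eq_norm (z : ℝ × ℝ) : nrm z = ‖(⟨z.1, z.2⟩ : ℂ)‖ := by
  rw [Complex.norm_def, Complex.normSq_apply, nrm]
  congr 1; simp only; ring

lemma exists_polar (z : ℝ × ℝ) :
    ∃ θ, z.1 = nrm z * Real.cos θ ∧ z.2 = nrm z * Real.sin θ := by
  refine ⟨Complex.arg ⟨z.1, z.2⟩, ?_, ?_⟩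
  · rw [nrm_eq_norm, Complex.norm_mul_cos_arg]
  · rw [nrm_eq_norm, Complex.norm_mul_sin_arg]

/-- A polar rectangle through `z`, with radii `|z|` and `|z| + cost` and a suitable angle, changes
only the height, by the prescribed amount `w`. -/
lemma joined_loop {m : ℝ} (hm : 1 ≤ m) (z : ℝ × ℝ) (t w : ℝ) :
    ∃ L, L ≤ 5 * cost m (nrm z) w ∧ HorJoined m (z.1, z.2, t) (z.1, z.2, t + w) L := by
  obtain ⟨θ, h1, h2⟩ := exists_polar z
  have hρ := nrm_nonneg z
  rw [h1, h2]
  have hb := loop_bound hm hρ w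
  obtain ⟨c0, hc⟩ := cost_spec hm hρ w
  generalize nrm z = ρ at *
  generalize cost m ρ w = c at *
  set D := (ρ + c) ^ (2 * m + 2) - ρ ^ (2 * m + 2) with hD
  have hD0 : 0 ≤ D := by
    have := Real.rpow_le_rpow hρ (by linarith : ρ ≤ ρ + c) (by linarith : 0 ≤ 2 * m + 2)
    linarith
  -- The loop below raises the height by `-D * φ`.
  have hφ : ∃ φ, D * φ = -w ∧ (2 * ρ + c) * |φ| ≤ 3 * c := by
    rcases eq_or_ne w 0 with h | h
    · exact ⟨0, by simp [h], by simp; linarith⟩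
    · have hw : 0 < |w| := abs_pos.2 h
      have hcpos : 0 < c := by
        rcases eq_or_lt_of_le c0 with h' | h'
        · exfalso
          rw [← h', Real.zero_rpow (by linarith)] at hc
          rcases hc with ⟨h, -⟩ | ⟨h, -⟩
          · linarith
          · norm_num at h; exact hw.ne h
        · exact h'
      have hDpos : 0 < D := by
        rcases eq_or_lt_of_le hD0 with h' | h'
        · rw [← h', mul_zero] at hb
          have : 0 < (2 * ρ + c) * |w| := by positivity
          linarith
        · exact h'
      refine ⟨-w / D, by field_simp, ?_⟩
      rw [abs_div, abs_neg, abs_of_pos hDpos, ← mul_div_assoc, div_le_iff₀ hDpos]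
      exact hb
  obtain ⟨φ, hφ1, hφ2⟩ := hφ
  have J1 := joined_radial hm ρ (ρ + c) θ t
  have J2 := joined_arc hm (by linarith : 0 ≤ ρ + c) θ φ t
  have J3 := joined_radial hm (ρ + c) ρ (θ + φ) (t - (ρ + c) ^ (2 * m + 2) * φ)
  have J4 := joined_arc hm hρ (θ + φ) (-φ) (t - (ρ + c) ^ (2 * m + 2) * φ)
  have J := ((J1.trans J2).trans J3).trans J4
  have e : t - (ρ + c) ^ (2 * m + 2) * φ - ρ ^ (2 * m + 2) * -φ = t + w := by
    linear_combination -hφ1 + φ * hD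
  rw [e, add_neg_cancel_right] at J
  refine ⟨_, ?_, J⟩
  rw [abs_neg, show ρ + c - ρ = c by ring, show ρ - (ρ + c) = -c by ring, abs_neg,
    abs_of_nonneg c0]
  linarith

/-! ### Estimates along a horizontal curve -/

lemma rpow_diff {m : ℝ} (hm : 1 ≤ m) {a b M : ℝ} (ha : 0 ≤ a) (hb : 0 ≤ b) (haM : a ≤ M)
    (hbM : b ≤ M) : |a ^ (2 * m) - b ^ (2 * m)| * M ≤ 2 * m * M ^ (2 * m) * |a - b| := by
  have hM : 0 ≤ M := ha.trans haM
  have := (convex_Icc (0 : ℝ) M).norm_image_sub_le_of_norm_hasDerivWithin_le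
    (f := fun x => x ^ (2 * m)) (f' := fun x => 2 * m * x ^ (2 * m - 1))
    (C := 2 * m * M ^ (2 * m - 1))
    (fun x _ => (Real.hasDerivAt_rpow_const (Or.inr (by linarith))).hasDerivWithinAt)
    (fun x hx => by
      have hx0 : 0 ≤ x := hx.1
      rw [Real.norm_eq_abs, abs_of_nonneg (by positivity)]
      have := Real.rpow_le_rpow hx0 hx.2 (by linarith : 0 ≤ 2 * m - 1)
      gcongr)
    (mem_Icc.2 ⟨hb, hbM⟩) (mem_Icc.2 ⟨ha, haM⟩)
  simp only [Real.norm_eq_abs] at this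
  have e : M ^ (2 * m) = M ^ (2 * m - 1) * M := by
    rw [← Real.rpow_add_one' hM (by linarith)]; congr 1; ring
  rw [e]
  nlinarith [mul_le_mul_of_nonneg_right this hM]

lemma nrm_sub_le (z ζ : ℝ × ℝ) : nrm (z - ζ) ≤ |z.1 - ζ.1| + |z.2 - ζ.2| := by
  rw [nrm, Real.sqrt_le_left (by positivity)]
  simp only [Prod.fst_sub, Prod.snd_sub]
  nlinarith [sq_abs (z.1 - ζ.1), sq_abs (z.2 - ζ.2),
    mul_nonneg (abs_nonneg (z.1 - ζ.1)) (abs_nonneg (z.2 - ζ.2))]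

lemma abs_nrm_sub_le (z ζ : ℝ × ℝ) : |nrm z - nrm ζ| ≤ |z.1 - ζ.1| + |z.2 - ζ.2| := by
  refine le_trans ?_ (nrm_sub_le z ζ)
  rw [nrm_eq_norm, nrm_eq_norm, nrm_eq_norm]
  exact abs_norm_sub_norm_le (⟨z.1, z.2⟩ : ℂ) ⟨ζ.1, ζ.2⟩

lemma abs_fst_le (z : ℝ × ℝ) : |z.1| ≤ nrm z := by
  rw [nrm]; exact Real.abs_le_sqrt (by nlinarith [sq_nonneg z.2])

lemma abs_snd_le (z : ℝ × ℝ) : |z.2| ≤ nrm z := by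
  rw [nrm]; exact Real.abs_le_sqrt (by nlinarith [sq_nonneg z.1])

/-- The `t`-components of `X` and `Y` at `ζ` and `z` differ by `O((|z| + L) ^ (2m) L)`. -/
lemma field_diff {m : ℝ} (hm : 1 ≤ m) {z ζ : ℝ × ℝ} {L : ℝ} (h1 : |ζ.1 - z.1| ≤ L)
    (h2 : |ζ.2 - z.2| ≤ L) :
    |w2m m ζ * ζ.1 - w2m m z * z.1| ≤ (4 * m + 1) * (nrm z + 2 * L) ^ (2 * m) * L ∧
    |w2m m ζ * ζ.2 - w2m m z * z.2| ≤ (4 * m + 1) * (nrm z + 2 * L) ^ (2 * m) * L := by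
  have hL : 0 ≤ L := (abs_nonneg _).trans h1
  have hd : |nrm ζ - nrm z| ≤ 2 * L := (abs_nrm_sub_le ζ z).trans (by linarith)
  have hz := nrm_nonneg z
  have hζ := nrm_nonneg ζ
  have hM : nrm ζ ≤ nrm z + 2 * L := by linarith [(abs_le.1 hd).2]
  have hM' : nrm z ≤ nrm z + 2 * L := by linarith
  have hr := rpow_diff hm hζ hz hM hM'
  have hw : 0 ≤ nrm z ^ (2 * m) := by positivity
  have hwM : nrm z ^ (2 * m) ≤ (nrm z + 2 * L) ^ (2 * m) :=
    Real.rpow_le_rpow hz hM' (by linarith)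
  have a1 := (abs_fst_le ζ).trans hM
  have a2 := (abs_snd_le ζ).trans hM
  rw [w2m_eq, w2m_eq]
  set M := nrm z + 2 * L
  have hMp : 0 ≤ M ^ (2 * m) := hw.trans hwM
  have main : ∀ u u0 : ℝ, |u| ≤ M → |u - u0| ≤ L →
      |nrm ζ ^ (2 * m) * u - nrm z ^ (2 * m) * u0| ≤ (4 * m + 1) * M ^ (2 * m) * L := by
    intro u u0 hu huu
    have e : nrm ζ ^ (2 * m) * u - nrm z ^ (2 * m) * u0 =
      (nrm ζ ^ (2 * m) - nrm z ^ (2 * m)) * u + nrm z ^ (2 * m) * (u - u0) := by ring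
    calc _ ≤ |nrm ζ ^ (2 * m) - nrm z ^ (2 * m)| * |u| + nrm z ^ (2 * m) * |u - u0| := by
          rw [e]
          refine (abs_add_le _ _).trans ?_
          rw [abs_mul, abs_mul, abs_of_nonneg hw]
      _ ≤ |nrm ζ ^ (2 * m) - nrm z ^ (2 * m)| * M + M ^ (2 * m) * L := by gcongr
      _ ≤ 2 * m * M ^ (2 * m) * (2 * L) + M ^ (2 * m) * L := by
          have : 2 * m * M ^ (2 * m) * |nrm ζ - nrm z| ≤ 2 * m * M ^ (2 * m) * (2 * L) := by
            gcongr
          linarith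
      _ = _ := by ring
  exact ⟨main _ _ a1 h1, main _ _ a2 h2⟩

/-- The basic estimate, with `v = vof m p q`: along a horizontal curve of length `L`,
`|v| ≤ C (|z| + L) ^ (2m) L ^ 2`. -/
lemma HorJoined.bounds {m : ℝ} (hm : 1 ≤ m) {p q : ℝ × ℝ × ℝ} {L : ℝ} (h : HorJoined m p q L) :
    nrm ((p.1, p.2.1) - (q.1, q.2.1)) ≤ 2 * L ∧
    |vof m p q| ≤ (4 * m + 1) *
      ((nrm (p.1, p.2.1) + 2 * L) ^ (2 * m) * (2 * L) ^ 2) := by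
  obtain ⟨T, hT, γ, α, β, hh, hi, h0, hq, hL⟩ := h
  obtain ⟨iα, iβ, iσ⟩ := speed_integrable hi
  set σ : ℝ → ℝ := fun s => Real.sqrt (α s ^ 2 + β s ^ 2) with hσ
  have hασ : ∀ s, |α s| ≤ σ s := fun s => abs_fst_le (α s, β s)
  have hβσ : ∀ s, |β s| ≤ σ s := fun s => abs_snd_le (α s, β s)
  have sub : ∀ t ∈ Icc 0 T, uIcc 0 t ⊆ uIcc 0 T := by
    intro t ht
    rw [uIcc_of_le ht.1, uIcc_of_le hT]; exact Icc_subset_Icc_right ht.2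
  have comp : ∀ F : (ℝ × ℝ × ℝ) →L[ℝ] ℝ, ∀ t ∈ Icc 0 T,
      F (γ t) - F p = ∫ s in (0 : ℝ)..t, F (velo m γ α β s) := by
    intro F t ht
    have e : γ t = γ 0 + ∫ s in (0 : ℝ)..t, velo m γ α β s := hh t ht
    rw [F.intervalIntegral_comp_comm (hi.mono_set (sub t ht)), e, h0, map_add]; ring
  have c1 : ∀ t ∈ Icc 0 T, (γ t).1 - p.1 = ∫ s in (0 : ℝ)..t, α s := by
    intro t ht
    have := comp (ContinuousLinearMap.fst ℝ ℝ (ℝ × ℝ)) t ht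
    simpa [velo, Xvf, Yvf] using this
  have c2 : ∀ t ∈ Icc 0 T, (γ t).2.1 - p.2.1 = ∫ s in (0 : ℝ)..t, β s := by
    intro t ht
    have := comp ((ContinuousLinearMap.fst ℝ ℝ ℝ).comp (ContinuousLinearMap.snd ℝ ℝ (ℝ × ℝ))) t ht
    simpa [velo, Xvf, Yvf] using this
  have bnd : ∀ f : ℝ → ℝ, (∀ s, |f s| ≤ σ s) → ∀ t ∈ Icc 0 T, |∫ s in (0 : ℝ)..t, f s| ≤ L := by
    intro f hf t ht
    have := intervalIntegral.norm_integral_le_of_norm_le (f := f) ht.1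
      (Filter.Eventually.of_forall fun s _ => hf s) (iσ.mono_set (sub t ht))
    refine this.trans ?_
    rw [hL, ccLength]
    exact intervalIntegral.integral_mono_interval le_rfl ht.1 ht.2
      (Filter.Eventually.of_forall fun s => Real.sqrt_nonneg _) iσ
  have b1 : ∀ t ∈ Icc 0 T, |(γ t).1 - p.1| ≤ L := fun t ht => by
    rw [c1 t ht]; exact bnd _ hασ t ht
  have b2 : ∀ t ∈ Icc 0 T, |(γ t).2.1 - p.2.1| ≤ L := fun t ht => by
    rw [c2 t ht]; exact bnd _ hβσ t ht
  have hTT : T ∈ Icc 0 T := ⟨hT, le_rfl⟩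
  have hL0 : 0 ≤ L := (abs_nonneg _).trans (b1 T hTT)
  constructor
  · refine (nrm_sub_le _ _).trans ?_
    have e1 := b1 T hTT
    have e2 := b2 T hTT
    rw [hq, abs_sub_comm] at e1 e2
    simp only
    linarith
  · set z : ℝ × ℝ := (p.1, p.2.1) with hz
    -- Freezing `|z| ^ (2m) z` at the starting point is exactly what the correction in `v` does.
    have hv : vof m p q = ∫ s in (0 : ℝ)..T,
        (α s * (w2m m ((γ s).1, (γ s).2.1) * (γ s).2.1 - w2m m z * z.2) -
          β s * (w2m m ((γ s).1, (γ s).2.1) * (γ s).1 - w2m m z * z.1)) := by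
      let F : (ℝ × ℝ × ℝ) →L[ℝ] ℝ :=
        (ContinuousLinearMap.snd ℝ ℝ ℝ).comp (ContinuousLinearMap.snd ℝ ℝ (ℝ × ℝ)) +
        (w2m m z * z.1) •
          (ContinuousLinearMap.fst ℝ ℝ ℝ).comp (ContinuousLinearMap.snd ℝ ℝ (ℝ × ℝ)) -
        (w2m m z * z.2) • ContinuousLinearMap.fst ℝ ℝ (ℝ × ℝ)
      have hF : ∀ u : ℝ × ℝ × ℝ, F u = u.2.2 + w2m m z * z.1 * u.2.1 - w2m m z * z.2 * u.1 := by
        intro u; simp [F]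
      have := comp F T hTT
      simp only [hF, hq] at this
      have e : vof m p q = q.2.2 + w2m m z * z.1 * q.2.1 - w2m m z * z.2 * q.1 -
          (p.2.2 + w2m m z * z.1 * p.2.1 - w2m m z * z.2 * p.1) := by
        simp only [vof, hz]; ring
      rw [e, this]
      congr 1
      funext s
      simp [velo, Xvf, Yvf]
      ring
    set K := (4 * m + 1) * (nrm z + 2 * L) ^ (2 * m) * L with hK
    have hle : |vof m p q| ≤ ∫ s in (0 : ℝ)..T, 2 * K * σ s := by
      rw [hv, ← Real.norm_eq_abs]
      refine intervalIntegral.norm_integral_le_of_norm_le hT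
        (Filter.Eventually.of_forall fun s hs => ?_) (iσ.const_mul _)
      have hs' : s ∈ Icc 0 T := ⟨hs.1.le, hs.2⟩
      obtain ⟨f1, f2⟩ := field_diff hm (z := z) (ζ := ((γ s).1, (γ s).2.1)) (b1 s hs') (b2 s hs')
      rw [Real.norm_eq_abs]
      refine (abs_sub _ _).trans ?_
      rw [abs_mul, abs_mul]
      have hσ0 : 0 ≤ σ s := Real.sqrt_nonneg _
      have g1 := mul_le_mul (hασ s) f2 (abs_nonneg _) hσ0
      have g2 := mul_le_mul (hβσ s) f1 (abs_nonneg _) hσ0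
      simp only at g1 g2
      rw [← hK] at g1 g2
      linarith
    rw [intervalIntegral.integral_const_mul] at hle
    have hLσ : ∫ s in (0 : ℝ)..T, σ s = L := hL.symm
    rw [hLσ] at hle
    have : 0 ≤ K * L := by
      have := nrm_nonneg z
      positivity
    calc _ ≤ 2 * K * L := hle
      _ ≤ 4 * (K * L) := by linarith
      _ = _ := by rw [hK]; ring

lemma ccDist_nonneg (m : ℝ) (p q : ℝ × ℝ × ℝ) : 0 ≤ ccDist m p q := by
  refine Real.sInf_nonneg ?_
  rintro L ⟨T, hT, γ, α, β, -, -, -, rfl⟩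
  exact intervalIntegral.integral_nonneg hT fun s _ => Real.sqrt_nonneg _

lemma ccDist_le_of_joined {m : ℝ} {p q : ℝ × ℝ × ℝ} {L : ℝ} (h : HorJoined m p q L) :
    ccDist m p q ≤ L := by
  obtain ⟨T, hT, γ, α, β, hh, -, h0, hq, hL⟩ := h
  refine csInf_le ⟨0, ?_⟩ ⟨T, hT, γ, α, β, hh, h0, hq, hL⟩
  rintro L ⟨T, hT, γ, α, β, -, -, -, rfl⟩
  exact intervalIntegral.integral_nonneg hT fun s _ => Real.sqrt_nonneg _

lemma dlt_self {m : ℝ} (hm : 1 ≤ m) (p : ℝ × ℝ × ℝ) : dlt m p p = 0 := by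
  have hv : vof m p p = 0 := by simp only [vof]; ring
  have hc := cost_le hm (nrm_nonneg (p.1, p.2.1)) le_rfl le_rfl (v := 0) (by simp)
  have hc0 := (cost_spec hm (nrm_nonneg (p.1, p.2.1)) 0).1
  have hn : nrm 0 = 0 := nrm_eq_zero.2 rfl
  rw [dlt_eq, hv, sub_self, hn]
  linarith

/-- Lower bounds for `ccDist` need only be checked on curves with integrable velocity. -/
lemma le_ccDist {m : ℝ} {p q : ℝ × ℝ × ℝ} {a M : ℝ} (hM : HorJoined m p q M)
    (h : p ≠ q → ∀ L, HorJoined m p q L → a ≤ L) (ha : p = q → a ≤ 0) : a ≤ ccDist m p q := by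
  by_cases hpq : p = q
  · exact (ha hpq).trans (ccDist_nonneg m p q)
  obtain ⟨T, hT, γ, α, β, hh, -, h0, hq, hL⟩ := hM
  refine le_csInf ⟨M, T, hT, γ, α, β, hh, h0, hq, hL⟩ ?_
  rintro L ⟨T, hT, γ, α, β, hh, h0, hq, hL⟩
  refine h hpq L ⟨T, hT, γ, α, β, hh, ?_, h0, hq, hL⟩
  by_contra hni
  have e : γ T = γ 0 + ∫ s in (0 : ℝ)..T, velo m γ α β s := hh T ⟨hT, le_rfl⟩
  rw [intervalIntegral.integral_undef hni, add_zero, h0, hq] at e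
  exact hpq e.symm

/-- A vertical loop at `p` followed by the lifted segment joins `p` to `q` with length `O(δ(p, q))`.
The height `w` of the loop is `v(p, q)` minus the `v` of the segment, and the latter is controlled by
`HorJoined.bounds`. -/
lemma exists_joined {m : ℝ} (hm : 1 ≤ m) (p q : ℝ × ℝ × ℝ) :
    ∃ L, HorJoined m p q L ∧ L ≤ (1 + 10 * ((4 * m + 2) * 2 ^ m)) * dlt m p q := by
  obtain ⟨k, hk⟩ := joined_segment hm (p.1, p.2.1) (q.1, q.2.1)
  have hρ := nrm_nonneg (p.1, p.2.1)
  have hr := nrm_nonneg ((p.1, p.2.1) - (q.1, q.2.1))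
  have hseg := (hk p.2.2).bounds hm
  set w := q.2.2 - p.2.2 - k with hw
  obtain ⟨L, hL, hJ⟩ := joined_loop hm (p.1, p.2.1) p.2.2 w
  have J := hJ.trans (hk (p.2.2 + w))
  have e : p.2.2 + w + k = q.2.2 := by rw [hw]; ring
  rw [e] at J
  refine ⟨_, J, ?_⟩
  have hv : w = vof m p q - vof m (p.1, p.2.1, p.2.2) (q.1, q.2.1, p.2.2 + k) := by
    simp only [vof, hw]; ring
  have hvc := le_cost hm hρ (vof m p q)
  have hc0 := (cost_spec hm hρ (vof m p q)).1
  rw [dlt_eq]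
  have hs := hseg.2
  simp only at hs
  set ρ := nrm (p.1, p.2.1)
  set r := nrm ((p.1, p.2.1) - (q.1, q.2.1))
  set c := cost m ρ (vof m p q)
  have hwb : |w| ≤ (4 * m + 2) * ((ρ + (c + 2 * r)) ^ (2 * m) * (c + 2 * r) ^ 2) := by
    have x1 : (ρ + c) ^ (2 * m) * c ^ 2 ≤ (ρ + (c + 2 * r)) ^ (2 * m) * (c + 2 * r) ^ 2 := by
      gcongr <;> linarith
    have x2 : (ρ + 2 * r) ^ (2 * m) * (2 * r) ^ 2 ≤
        (ρ + (c + 2 * r)) ^ (2 * m) * (c + 2 * r) ^ 2 := by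
      gcongr <;> linarith
    have x3 := mul_le_mul_of_nonneg_left x2 (by linarith : 0 ≤ 4 * m + 1)
    rw [hv]
    refine (abs_sub _ _).trans ?_
    linarith
  have hcw := cost_le hm hρ (by linarith : 0 ≤ c + 2 * r) (by linarith) hwb
  have hB : 0 ≤ (4 * m + 2) * (2 : ℝ) ^ m := by positivity
  generalize (4 * m + 2) * (2 : ℝ) ^ m = B at *
  have := mul_nonneg hB hc0
  change L + r ≤ _
  nlinarith

/-- Ball-box estimate: the CC distance is globally comparable with the gauge `δ`. -/
theorem stmt5 (m : ℝ) (hm : 1 ≤ m) :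
    ∃ C : ℝ, 1 < C ∧ ∀ p q : ℝ × ℝ × ℝ,
      C⁻¹ * dlt m p q ≤ ccDist m p q ∧ ccDist m p q ≤ C * dlt m p q := by
  have hB : 0 < (4 * m + 2) * (2 : ℝ) ^ m := by positivity
  have hB' : (4 * m + 1) * (2 : ℝ) ^ m ≤ (4 * m + 2) * (2 : ℝ) ^ m := by gcongr; norm_num
  refine ⟨2 + 10 * ((4 * m + 2) * 2 ^ m), by linarith, fun p q => ?_⟩
  have hρ := nrm_nonneg (p.1, p.2.1)
  have hd : 0 ≤ dlt m p q := by
    rw [dlt_eq]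
    exact add_nonneg (nrm_nonneg _) (cost_spec hm hρ _).1
  obtain ⟨M, hM, hMle⟩ := exists_joined hm p q
  constructor
  · refine le_ccDist hM (fun _ L hL => ?_) ?_
    · obtain ⟨h1, h2⟩ := hL.bounds hm
      have hL0 : 0 ≤ 2 * L := (nrm_nonneg _).trans h1
      have h3 := cost_le hm hρ hL0 (by linarith) h2
      rw [inv_mul_le_iff₀ (by linarith), dlt_eq]
      have := mul_le_mul_of_nonneg_right hB' hL0
      have := mul_nonneg hB.le hL0
      linarith
    · rintro rfl
      rw [dlt_self hm, mul_zero]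
  · refine (ccDist_le_of_joined hM).trans (hMle.trans ?_)
    gcongr
    norm_num
end
end

section
/- Let m ≥ 1 and let d be the CC distance of X = ∂_x + |z|^{2m} y ∂_t, Y = ∂_y − |z|^{2m} x ∂_t, with CC-balls B(p,r). There exist constants c, ε₀ > 0 depending only on m such that the Lebesgue measure of B(p,r), p = (z,t), satisfies: c^{-1}|z|^{2m} r⁴ ≤ |B(p,r)| ≤ c |z|^{2m} r⁴ if r ≤ ε₀|z|, and c^{-1} r^{2m+4} ≤ |B(p,r)| ≤ c r^{2m+4} if r ≥ ε₀|z|. -/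
/-!
The volume is found by squeezing the ball between two boxes of comparable size, given by
`|x' - x| ≤ a`, `|y' - y| ≤ a`, and `t'` within `h` of a function of `(x', y')`. Such a box has
volume `8 a² h` (`volume_shBox`). The threshold is `ε₀ = 10`.

Upper bounds. A curve of length less than `r` moves `(x, y)` by at most `r`, and its height
satisfies `dt = |ζ|^(2m) (η dξ - ξ dη)`. If the coefficients `|ζ|^(2m) η` and `|ζ|^(2m) ξ` are
within `K` of constants `A` and `B` on the `r`-neighbourhood of `z`, then `t' - t` is within
`2 K r` of `A u₁ - B u₂` (`mem_box_of_mem_ball`). For `r ≥ 10 |z|` take `A = B = 0` and `K` of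
order `r^(2m+1)`; for `r ≤ 10 |z|` take the values at `z`, and `K` of order `|z|^(2m) r` by the
mean value inequality.

Lower bounds. In polar coordinates `dt = -ρ^(2m+2) dθ`: radial motion keeps the height, and a
rotation by `φ` at radius `ρ` changes it by `-ρ^(2m+2) φ`. For `r ≥ 10 |z|`, a trip through the
axis with a rotation at radius `r / 10` reaches every height within `(r / 10)^(2m+2)` of `t`
(`reach_axis`). For `r ≤ 10 |z|` and `s = r / 100`, dividing the required rotation between the radii
`|z|` and `|z| + s` gives heights in an interval of length of order `|z|^(2m) s²`
(`reach_annulus`). The first construction also joins any two points, so the infimum defining the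
distance is never taken over the empty set.
-/

open MeasureTheory Set

noncomputable section

/-- CC ball. -/
def ccBall (m : ℝ) (p : ℝ × ℝ × ℝ) (r : ℝ) : Set (ℝ × ℝ × ℝ) :=
  {q | ccDist m p q < r}

/-! ### Horizontal curves and their concatenation -/

section Glue

variable {E : Type*} [NormedAddCommGroup E] {h1 h2 : ℝ → E} {T1 T2 : ℝ}

/-- `h1` on `(-∞, T1]`, followed by `h2` run from time `T1` on. -/
def glue {A : Type*} (T1 : ℝ) (h1 h2 : ℝ → A) : ℝ → A :=
  fun s => if s ≤ T1 then h1 s else h2 (s - T1)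

lemma glue_intervalIntegrable (hT1 : 0 ≤ T1) (hT2 : 0 ≤ T2)
    (i1 : IntervalIntegrable h1 volume 0 T1) (i2 : IntervalIntegrable h2 volume 0 T2) :
    IntervalIntegrable (glue T1 h1 h2) volume 0 T1 ∧
      IntervalIntegrable (glue T1 h1 h2) volume T1 (T1 + T2) := by
  constructor
  · refine i1.congr fun s hs => ?_
    rw [uIoc_of_le hT1] at hs
    simp [glue, hs.2]
  · have i3 := i2.comp_sub_right T1
    rw [zero_add, add_comm T2] at i3
    refine i3.congr fun s hs => ?_
    rw [uIoc_of_le (by linarith)] at hs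
    simp [glue, hs.1]

variable [NormedSpace ℝ E]

lemma glue_integral_left {t : ℝ} (ht : 0 ≤ t) (htT : t ≤ T1) :
    ∫ s in (0 : ℝ)..t, glue T1 h1 h2 s = ∫ s in (0 : ℝ)..t, h1 s := by
  refine intervalIntegral.integral_congr fun s hs => ?_
  rw [uIcc_of_le ht] at hs
  simp [glue, hs.2.trans htT]

lemma glue_integral_right (hT1 : 0 ≤ T1)
    (i1 : IntervalIntegrable h1 volume 0 T1) (i2 : IntervalIntegrable h2 volume 0 T2)
    {t : ℝ} (ht : 0 ≤ t) (htT : t ≤ T2) :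
    ∫ s in (0 : ℝ)..(T1 + t), glue T1 h1 h2 s =
      (∫ s in (0 : ℝ)..T1, h1 s) + ∫ s in (0 : ℝ)..t, h2 s := by
  have i2' : IntervalIntegrable h2 volume 0 t :=
    i2.mono_set (by rw [uIcc_of_le ht, uIcc_of_le (ht.trans htT)]; exact Icc_subset_Icc_right htT)
  obtain ⟨a, b⟩ := glue_intervalIntegrable hT1 ht i1 i2'
  rw [← intervalIntegral.integral_add_adjacent_intervals a b, glue_integral_left hT1 le_rfl]
  congr 1
  have : ∫ s in T1..(T1 + t), glue T1 h1 h2 s = ∫ s in T1..(T1 + t), h2 (s - T1) := by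
    refine intervalIntegral.integral_congr_ae (Filter.Eventually.of_forall fun s hs => ?_)
    rw [uIoc_of_le (by linarith)] at hs
    simp [glue, hs.1]
  rw [this, intervalIntegral.integral_comp_sub_right]
  simp

end Glue

/-- The velocity `α X + β Y` of a horizontal curve. -/
def vel (m : ℝ) (γ : ℝ → ℝ × ℝ × ℝ) (α β : ℝ → ℝ) (s : ℝ) : ℝ × ℝ × ℝ :=
  α s • Xvf m (γ s) + β s • Yvf m (γ s)

/-- The speed `√(α² + β²)` of a horizontal curve. -/
def spd (α β : ℝ → ℝ) (s : ℝ) : ℝ := Real.sqrt (α s ^ 2 + β s ^ 2)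

/-- `q` is joined to `p` by a horizontal curve of length `L` whose velocity and speed are
integrable. Integrability is recorded because the Bochner integrals in `IsHorizontal` and
`ccLength` vanish without it, and then they do not add up under concatenation. -/
def Reach (m : ℝ) (p q : ℝ × ℝ × ℝ) (L : ℝ) : Prop :=
  ∃ T, 0 ≤ T ∧ ∃ γ α β, IsHorizontal m γ α β T ∧ γ 0 = p ∧ γ T = q ∧
    IntervalIntegrable (vel m γ α β) volume 0 T ∧ IntervalIntegrable (spd α β) volume 0 T ∧
    L = ccLength α β T

lemma Reach.trans {m : ℝ} {p q u : ℝ × ℝ × ℝ} {L1 L2 : ℝ} (h1 : Reach m p q L1)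
    (h2 : Reach m q u L2) : Reach m p u (L1 + L2) := by
  obtain ⟨T1, hT1, γ1, α1, β1, H1, s1, e1, v1, l1, rfl⟩ := h1
  obtain ⟨T2, hT2, γ2, α2, β2, H2, s2, e2, v2, l2, rfl⟩ := h2
  have hv : vel m (glue T1 γ1 γ2) (glue T1 α1 α2) (glue T1 β1 β2) =
      glue T1 (vel m γ1 α1 β1) (vel m γ2 α2 β2) := by
    funext s; by_cases h : s ≤ T1 <;> simp [glue, vel, h]
  have hs : spd (glue T1 α1 α2) (glue T1 β1 β2) = glue T1 (spd α1 β1) (spd α2 β2) := by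
    funext s; by_cases h : s ≤ T1 <;> simp [glue, spd, h]
  have g0 : glue T1 γ1 γ2 0 = p := by simp [glue, hT1, s1]
  have hright : ∀ t, 0 ≤ t → glue T1 γ1 γ2 (T1 + t) = γ2 t := by
    intro t ht
    rcases ht.eq_or_lt with rfl | ht
    · simp [glue, e1, s2]
    · simp [glue, not_le.2 ht]
  refine ⟨T1 + T2, by linarith, glue T1 γ1 γ2, glue T1 α1 α2, glue T1 β1 β2, ?_, g0, ?_, ?_, ?_, ?_⟩
  · intro t ht
    change _ = _ + ∫ s in (0 : ℝ)..t, vel m (glue T1 γ1 γ2) (glue T1 α1 α2) (glue T1 β1 β2) s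
    rw [hv, g0]
    rcases le_total t T1 with h | h
    · rw [glue_integral_left ht.1 h, ← s1]
      have := H1 t ⟨ht.1, h⟩
      simpa [glue, h, vel] using this
    · obtain ⟨r, rfl⟩ : ∃ r, t = T1 + r := ⟨t - T1, by ring⟩
      have hr : 0 ≤ r := by linarith
      have hr2 : r ≤ T2 := by linarith [ht.2]
      rw [glue_integral_right hT1 v1 v2 hr hr2, hright r hr]
      have a1 := H1 T1 ⟨hT1, le_rfl⟩
      have a2 := H2 r ⟨hr, hr2⟩
      rw [e1, s1] at a1
      rw [s2] at a2
      rw [← add_assoc, a2]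
      exact congrArg (· + _) a1
  · rw [hright T2 hT2, e2]
  · rw [hv]
    obtain ⟨a, b⟩ := glue_intervalIntegrable hT1 hT2 v1 v2
    exact a.trans b
  · rw [hs]
    obtain ⟨a, b⟩ := glue_intervalIntegrable hT1 hT2 l1 l2
    exact a.trans b
  · change _ = ∫ s in (0 : ℝ)..(T1 + T2), spd (glue T1 α1 α2) (glue T1 β1 β2) s
    rw [hs, glue_integral_right hT1 l1 l2 hT2 le_rfl]
    rfl

/-- A differentiable curve on `[0, 1]` with continuous horizontal velocity and constant speed
`L`. -/
lemma Reach.of_hasDerivAt {m : ℝ} {γ v : ℝ → ℝ × ℝ × ℝ} {α β : ℝ → ℝ} {L : ℝ}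
    (hγ : ∀ s, HasDerivAt γ (v s) s) (hv : ∀ s, vel m γ α β s = v s) (hvc : Continuous v)
    (hL : ∀ s, spd α β s = L) : Reach m (γ 0) (γ 1) L := by
  have hv' : vel m γ α β = v := funext hv
  have hL' : spd α β = fun _ => L := funext hL
  refine ⟨1, zero_le_one, γ, α, β, ?_, rfl, rfl, ?_, ?_, ?_⟩
  · intro t _
    change _ = _ + ∫ s in (0 : ℝ)..t, vel m γ α β s
    rw [hv', intervalIntegral.integral_eq_sub_of_hasDerivAt (fun s _ => hγ s)
      (hvc.intervalIntegrable _ _)]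
    abel
  · rw [hv']; exact hvc.intervalIntegrable _ _
  · rw [hL']; exact continuous_const.intervalIntegrable _ _
  · change _ = ∫ s in (0 : ℝ)..1, spd α β s
    rw [hL']; simp

/-! ### Radial and circular curves -/

/-- The point with polar coordinates `(ρ, θ)` in the plane and height `t`. -/
def pol (ρ θ t : ℝ) : ℝ × ℝ × ℝ := (ρ * Real.cos θ, ρ * Real.sin θ, t)

/-- Radial motion leaves the height unchanged, since `y dx - x dy` vanishes on rays. -/
lemma reach_radial (m ρ ρ' θ t : ℝ) : Reach m (pol ρ θ t) (pol ρ' θ t) |ρ' - ρ| := by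
  have key := Reach.of_hasDerivAt (m := m) (γ := fun s => pol (ρ + s * (ρ' - ρ)) θ t)
    (v := fun _ => ((ρ' - ρ) * Real.cos θ, (ρ' - ρ) * Real.sin θ, 0))
    (α := fun _ => (ρ' - ρ) * Real.cos θ) (β := fun _ => (ρ' - ρ) * Real.sin θ)
    (L := |ρ' - ρ|) ?_ ?_ continuous_const ?_
  · simpa using key
  · intro s
    have h : HasDerivAt (fun s : ℝ => ρ + s * (ρ' - ρ)) (ρ' - ρ) s := by
      simpa using ((hasDerivAt_id s).mul_const (ρ' - ρ)).const_add ρ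
    exact (h.mul_const _).prodMk ((h.mul_const _).prodMk (hasDerivAt_const _ _))
  · intro s
    simp only [vel, Xvf, Yvf, pol, Prod.smul_mk, Prod.mk_add_mk, smul_eq_mul, Prod.mk.injEq]
    refine ⟨by ring, by ring, by ring⟩
  · intro s
    simp only [spd]
    rw [← Real.sqrt_sq_eq_abs]
    congr 1
    linear_combination (ρ' - ρ) ^ 2 * Real.cos_sq_add_sin_sq θ

/-- Rotating by `φ` at radius `ρ` changes the height by `-ρ ^ (2 m + 2) φ`. -/
lemma reach_rot {m : ℝ} (hm : 1 ≤ m) (ρ θ φ t : ℝ) :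
    Reach m (pol ρ θ t) (pol ρ (θ + φ) (t - (ρ ^ 2) ^ (m + 1) * φ)) (|ρ| * |φ|) := by
  have hpow : (ρ ^ 2) ^ (m + 1) = (ρ ^ 2) ^ m * ρ ^ 2 := by
    rw [Real.rpow_add_of_nonneg (sq_nonneg ρ) (by linarith) zero_le_one, Real.rpow_one]
  have key := Reach.of_hasDerivAt (m := m)
    (γ := fun s => pol ρ (θ + s * φ) (t - (ρ ^ 2) ^ (m + 1) * (s * φ)))
    (v := fun s => (ρ * (-Real.sin (θ + s * φ) * φ), ρ * (Real.cos (θ + s * φ) * φ),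
      -((ρ ^ 2) ^ (m + 1) * φ)))
    (α := fun s => ρ * (-Real.sin (θ + s * φ) * φ)) (β := fun s => ρ * (Real.cos (θ + s * φ) * φ))
    (L := |ρ| * |φ|) ?_ ?_ (by fun_prop) ?_
  · simpa using key
  · intro s
    have h0 : HasDerivAt (fun s : ℝ => s * φ) φ s := by
      simpa using (hasDerivAt_id s).mul_const φ
    have h := h0.const_add θ
    refine (h.cos.const_mul ρ).prodMk ((h.sin.const_mul ρ).prodMk ?_)
    simpa using (h0.const_mul ((ρ ^ 2) ^ (m + 1))).const_sub t
  · intro s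
    have hw : w2m m (ρ * Real.cos (θ + s * φ), ρ * Real.sin (θ + s * φ)) = (ρ ^ 2) ^ m := by
      unfold w2m
      congr 1
      linear_combination ρ ^ 2 * Real.cos_sq_add_sin_sq (θ + s * φ)
    simp only [vel, Xvf, Yvf, pol, Prod.smul_mk, Prod.mk_add_mk, smul_eq_mul, Prod.mk.injEq, hw]
    refine ⟨by ring, by ring, ?_⟩
    rw [hpow]
    linear_combination
      (-(ρ ^ 2) ^ m * ρ ^ 2 * φ) * Real.cos_sq_add_sin_sq (θ + s * φ)
  · intro s
    simp only [spd]
    rw [← abs_mul, ← Real.sqrt_sq_eq_abs]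
    congr 1
    linear_combination (ρ * φ) ^ 2 * Real.cos_sq_add_sin_sq (θ + s * φ)

/-- The origin of the plane is a pole of the polar coordinates: its angle can be changed freely. -/
lemma pol_zero (θ θ' t : ℝ) : pol 0 θ t = pol 0 θ' t := by simp [pol]

/-- Joining two points through the `t`-axis, with a circular detour at radius `ρ` which
accounts for the change of height. -/
lemma reach_axis {m : ℝ} (hm : 1 ≤ m) (R θ t R' θ' t' : ℝ) {ρ : ℝ} (hρ : 0 < ρ) :
    Reach m (pol R θ t) (pol R' θ' t')
      (|R| + (ρ + (ρ * (|t' - t| / (ρ ^ 2) ^ (m + 1)) + (ρ + |R'|)))) := by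
  have hD : 0 < (ρ ^ 2) ^ (m + 1) := by positivity
  set φ := -(t' - t) / (ρ ^ 2) ^ (m + 1) with hφ
  have hφa : |φ| = |t' - t| / (ρ ^ 2) ^ (m + 1) := by
    rw [hφ, abs_div, abs_neg, abs_of_pos hD]
  have a1 := reach_radial m R 0 θ t
  have a2 := reach_radial m 0 ρ θ t
  have a3 := reach_rot hm ρ θ φ t
  have a4 := reach_radial m ρ 0 (θ + φ) (t - (ρ ^ 2) ^ (m + 1) * φ)
  have a5 := reach_radial m 0 R' θ' t'
  have ht : t - (ρ ^ 2) ^ (m + 1) * φ = t' := by rw [hφ]; field_simp; ring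
  rw [ht] at a3 a4
  rw [pol_zero _ θ'] at a4
  have := a1.trans (a2.trans (a3.trans (a4.trans a5)))
  simpa [abs_of_pos hρ, hφa] using this

/-- Joining two points by way of the radii `R` and `R + s`: the angle `Δ` is split into a rotation
by `Δ - β` at radius `R` and one by `β` at radius `R + s`. Only the height depends on the splitting,
and `β` is chosen to produce the height `t'`. -/
lemma reach_annulus {m : ℝ} (hm : 1 ≤ m) {R s : ℝ} (hR : 0 < R) (hs : 0 < s)
    (θ t R' Δ t' : ℝ) : ∃ β : ℝ,
      |β| * ((R ^ 2) ^ m * (2 * R * s)) ≤ |t' - (t - (R ^ 2) ^ (m + 1) * Δ)| ∧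
      Reach m (pol R θ t) (pol R' (θ + Δ) t')
        (R * |Δ - β| + (s + ((R + s) * |β| + |R' - (R + s)|))) := by
  -- the change of height per unit of angle moved from radius `R` to radius `R + s`
  set D := ((R + s) ^ 2) ^ (m + 1) - (R ^ 2) ^ (m + 1) with hDdef
  have hD : (R ^ 2) ^ m * (2 * R * s) ≤ D := by
    have e : ∀ x : ℝ, 0 < x → (x ^ 2) ^ (m + 1) = (x ^ 2) ^ m * x ^ 2 := fun x hx => by
      rw [Real.rpow_add (by positivity), Real.rpow_one]
    have h1 : (R ^ 2) ^ m ≤ ((R + s) ^ 2) ^ m :=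
      Real.rpow_le_rpow (by positivity) (by nlinarith) (by linarith)
    rw [hDdef, e R hR, e (R + s) (by linarith)]
    have h2 : 0 < (R ^ 2) ^ m := by positivity
    nlinarith [mul_le_mul_of_nonneg_right h1 (sq_nonneg (R + s)), mul_pos h2 (mul_pos hs hs)]
  have hD0 : 0 < D := lt_of_lt_of_le (by positivity) hD
  set β := -(t' - (t - (R ^ 2) ^ (m + 1) * Δ)) / D with hβ
  have hβD : β * D = -(t' - (t - (R ^ 2) ^ (m + 1) * Δ)) := by rw [hβ]; field_simp
  refine ⟨β, ?_, ?_⟩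
  · calc |β| * ((R ^ 2) ^ m * (2 * R * s)) ≤ |β| * D := by gcongr
      _ = |β * D| := by rw [abs_mul, abs_of_pos hD0]
      _ = _ := by rw [hβD, abs_neg]
  · have a1 := reach_rot hm R θ (Δ - β) t
    have a2 := reach_radial m R (R + s) (θ + (Δ - β)) (t - (R ^ 2) ^ (m + 1) * (Δ - β))
    have a3 := reach_rot hm (R + s) (θ + (Δ - β)) β (t - (R ^ 2) ^ (m + 1) * (Δ - β))
    have ht : t - (R ^ 2) ^ (m + 1) * (Δ - β) - ((R + s) ^ 2) ^ (m + 1) * β = t' := by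
      rw [hDdef] at hβD; linear_combination -hβD
    have hθ : θ + (Δ - β) + β = θ + Δ := by ring
    rw [ht, hθ] at a3
    have a4 := reach_radial m (R + s) R' (θ + Δ) t'
    have := a1.trans (a2.trans (a3.trans a4))
    simpa [abs_of_pos hR, abs_of_pos hs, abs_of_pos (add_pos hR hs)] using this

/-! ### Distance and horizontal curves -/

lemma ccDist_le {m : ℝ} {p q : ℝ × ℝ × ℝ} {L : ℝ} (h : Reach m p q L) : ccDist m p q ≤ L := by
  obtain ⟨T, hT, γ, α, β, H, h0, h1, -, -, rfl⟩ := h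
  refine csInf_le ⟨0, ?_⟩ ⟨T, hT, γ, α, β, H, h0, h1, rfl⟩
  rintro _ ⟨T, hT, γ, α, β, -, -, -, rfl⟩
  exact intervalIntegral.integral_nonneg hT fun s _ => Real.sqrt_nonneg _

lemma nrm_eq_norm_s18 (x y : ℝ) : nrm (x, y) = ‖(⟨x, y⟩ : ℂ)‖ := by
  rw [Complex.norm_def, Complex.normSq_mk, nrm]
  congr 1
  ring

lemma eq_pol (x y t : ℝ) : (x, y, t) = pol (nrm (x, y)) (Complex.arg ⟨x, y⟩) t := by
  rw [nrm_eq_norm_s18, pol, Complex.norm_mul_cos_arg, Complex.norm_mul_sin_arg]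

lemma exists_reach {m : ℝ} (hm : 1 ≤ m) (p q : ℝ × ℝ × ℝ) : ∃ L, Reach m p q L := by
  obtain ⟨x, y, t⟩ := p
  obtain ⟨x', y', t'⟩ := q
  rw [eq_pol x y t, eq_pol x' y' t']
  exact ⟨_, reach_axis hm _ _ _ _ _ _ one_pos⟩

lemma spd_intervalIntegrable {m : ℝ} {γ : ℝ → ℝ × ℝ × ℝ} {α β : ℝ → ℝ} {a b : ℝ}
    (h : IntervalIntegrable (vel m γ α β) volume a b) :
    IntervalIntegrable (spd α β) volume a b := by
  rw [intervalIntegrable_iff] at h ⊢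
  have h1 : IntegrableOn α (uIoc a b) volume := by
    simpa [vel, Xvf, Yvf, IntegrableOn] using Integrable.fst h
  have h2 : IntegrableOn β (uIoc a b) volume := by
    simpa [vel, Xvf, Yvf, IntegrableOn] using Integrable.fst (Integrable.snd h)
  refine Integrable.mono' (h1.abs.add h2.abs) ?_ (Filter.Eventually.of_forall fun s => ?_)
  · exact Real.continuous_sqrt.comp_aestronglyMeasurable
      ((h1.aestronglyMeasurable.pow 2).add (h2.aestronglyMeasurable.pow 2))
  · rw [Real.norm_eq_abs, abs_of_nonneg (show 0 ≤ spd α β s from Real.sqrt_nonneg _)]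
    refine Real.sqrt_le_iff.2 ⟨by simp only [Pi.add_apply]; positivity, ?_⟩
    simp only [Pi.add_apply]
    nlinarith [sq_abs (α s), sq_abs (β s), abs_nonneg (α s), abs_nonneg (β s),
      mul_nonneg (abs_nonneg (α s)) (abs_nonneg (β s))]

/-- A point of the ball is reached by a curve of length less than `r` with integrable velocity.
When the velocity is not integrable on `[0, T]`, its Bochner integral is zero by convention, so
the curve ends where it starts and a constant curve serves instead. -/
lemma exists_reach_of_mem {m : ℝ} (hm : 1 ≤ m) {p q : ℝ × ℝ × ℝ} {r : ℝ} (hr : 0 < r)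
    (h : q ∈ ccBall m p r) : ∃ L, Reach m p q L ∧ L < r := by
  have hne : { L : ℝ | ∃ T, 0 ≤ T ∧ ∃ γ α β, IsHorizontal m γ α β T ∧
    γ 0 = p ∧ γ T = q ∧ L = ccLength α β T }.Nonempty := by
    obtain ⟨L, T, hT, γ, α, β, H, h0, h1, -, -, hL⟩ := exists_reach hm p q
    exact ⟨L, T, hT, γ, α, β, H, h0, h1, hL⟩
  obtain ⟨L, ⟨T, hT, γ, α, β, H, h0, h1, hL⟩, hLr⟩ := exists_lt_of_csInf_lt hne h
  by_cases hi : IntervalIntegrable (vel m γ α β) volume 0 T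
  · exact ⟨L, ⟨T, hT, γ, α, β, H, h0, h1, hi, spd_intervalIntegrable hi, hL⟩, hLr⟩
  · have hpq : q = p := by
      have : γ T = γ 0 + ∫ s in (0 : ℝ)..T, vel m γ α β s := H T ⟨hT, le_rfl⟩
      rwa [intervalIntegral.integral_undef hi, h0, h1, add_zero] at this
    refine ⟨0, ?_, hr⟩
    obtain ⟨x, y, t⟩ := p
    rw [hpq, eq_pol x y t]
    simpa using reach_radial m (nrm (x, y)) (nrm (x, y)) (Complex.arg ⟨x, y⟩) t

/-- Along a horizontal curve, a linear functional varies by at most `C` times the length if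
its value on the velocity is at most `C` times the speed. -/
lemma abs_functional_le {m : ℝ} {γ : ℝ → ℝ × ℝ × ℝ} {α β : ℝ → ℝ} {T : ℝ}
    (H : IsHorizontal m γ α β T)
    (hv : IntervalIntegrable (vel m γ α β) volume 0 T)
    (hs : IntervalIntegrable (spd α β) volume 0 T)
    (ℓ : ℝ × ℝ × ℝ →L[ℝ] ℝ) {C : ℝ} (hC : 0 ≤ C)
    (h : ∀ s ∈ Icc 0 T, |ℓ (vel m γ α β s)| ≤ C * spd α β s) {t : ℝ} (ht : t ∈ Icc 0 T) :
    |ℓ (γ t - γ 0)| ≤ C * ccLength α β T := by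
  have hsub : uIcc 0 t ⊆ uIcc 0 T := by
    rw [uIcc_of_le ht.1, uIcc_of_le (ht.1.trans ht.2)]; exact Icc_subset_Icc_right ht.2
  have hv' := hv.mono_set hsub
  have e : γ t - γ 0 = ∫ s in (0 : ℝ)..t, vel m γ α β s := by
    rw [sub_eq_iff_eq_add']; exact H t ht
  rw [e, ← ContinuousLinearMap.intervalIntegral_comp_comm ℓ hv', ← Real.norm_eq_abs]
  calc ‖∫ s in (0 : ℝ)..t, ℓ (vel m γ α β s)‖ ≤ ∫ s in (0 : ℝ)..t, C * spd α β s := by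
        refine intervalIntegral.norm_integral_le_of_norm_le ht.1
          (Filter.Eventually.of_forall fun s hs => ?_) ((hs.mono_set hsub).const_mul C)
        exact h s ⟨hs.1.le, hs.2.trans ht.2⟩
    _ = C * ∫ s in (0 : ℝ)..t, spd α β s := intervalIntegral.integral_const_mul _ _
    _ ≤ C * ccLength α β T := by
        refine mul_le_mul_of_nonneg_left ?_ hC
        refine intervalIntegral.integral_mono_interval le_rfl ht.1 ht.2
          (Filter.Eventually.of_forall fun s => Real.sqrt_nonneg _) hs

/-- If the coefficients `|ζ|^(2m) η` and `|ζ|^(2m) ξ` of the fields stay within `K` of the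
constants `A` and `B` near the centre, then the ball lies in a box of height `2 K r` sheared by
the linear function `A u₁ - B u₂`. -/
lemma mem_box_of_mem_ball {m : ℝ} (hm : 1 ≤ m) {x y t x' y' t' r A B K : ℝ} (hr : 0 < r)
    (hK : 0 ≤ K)
    (hAB : ∀ a b, |a - x| ≤ r → |b - y| ≤ r →
      |w2m m (a, b) * b - A| ≤ K ∧ |w2m m (a, b) * a - B| ≤ K)
    (h : (x', y', t') ∈ ccBall m (x, y, t) r) :
    |x' - x| ≤ r ∧ |y' - y| ≤ r ∧ |t' - (t + (A * (x' - x) - B * (y' - y)))| ≤ 2 * K * r := by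
  obtain ⟨L, ⟨T, hT, γ, α, β, H, h0, h1, hv, hs, rfl⟩, hLr⟩ := exists_reach_of_mem hm hr h
  have hα : ∀ s, |α s| ≤ spd α β s := fun s => Real.abs_le_sqrt (by nlinarith [sq_nonneg (β s)])
  have hβ : ∀ s, |β s| ≤ spd α β s := fun s => Real.abs_le_sqrt (by nlinarith [sq_nonneg (α s)])
  set p1 := ContinuousLinearMap.fst ℝ ℝ (ℝ × ℝ) with hp1
  set p2 := (ContinuousLinearMap.fst ℝ ℝ ℝ).comp (ContinuousLinearMap.snd ℝ ℝ (ℝ × ℝ)) with hp2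
  set p3 := (ContinuousLinearMap.snd ℝ ℝ ℝ).comp (ContinuousLinearMap.snd ℝ ℝ (ℝ × ℝ)) with hp3
  have b1 : ∀ s ∈ Icc 0 T, |(γ s).1 - x| ≤ r := by
    intro s hs'
    have := abs_functional_le H hv hs p1 zero_le_one
      (fun s _ => by simpa [hp1, vel, Xvf, Yvf] using hα s) hs'
    rw [h0] at this
    simp [hp1] at this
    linarith
  have b2 : ∀ s ∈ Icc 0 T, |(γ s).2.1 - y| ≤ r := by
    intro s hs'
    have := abs_functional_le H hv hs p2 zero_le_one
      (fun s _ => by simpa [hp2, vel, Xvf, Yvf] using hβ s) hs'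
    rw [h0] at this
    simp [hp2] at this
    linarith
  have hTT : T ∈ Icc 0 T := ⟨hT, le_rfl⟩
  have c1 := b1 T hTT
  have c2 := b2 T hTT
  rw [h1] at c1 c2
  refine ⟨c1, c2, ?_⟩
  have c3 := abs_functional_le H hv hs (p3 - A • p1 + B • p2) (C := 2 * K) (by positivity) ?_ hTT
  · rw [h0, h1] at c3
    simp [hp1, hp2, hp3] at c3
    calc _ = |t' - t - A * (x' - x) + B * (y' - y)| := by congr 1; ring
      _ ≤ _ := c3
      _ ≤ _ := by gcongr
  · intro s hs'
    obtain ⟨k1, k2⟩ := hAB _ _ (b1 s hs') (b2 s hs')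
    have e : (p3 - A • p1 + B • p2) (vel m γ α β s) =
        α s * (w2m m ((γ s).1, (γ s).2.1) * (γ s).2.1 - A) -
          β s * (w2m m ((γ s).1, (γ s).2.1) * (γ s).1 - B) := by
      simp [hp1, hp2, hp3, vel, Xvf, Yvf]
      ring
    rw [e]
    refine (abs_sub _ _).trans ?_
    rw [abs_mul, abs_mul]
    have := mul_le_mul (hα s) k1 (abs_nonneg _) (Real.sqrt_nonneg _)
    have := mul_le_mul (hβ s) k2 (abs_nonneg _) (Real.sqrt_nonneg _)
    linarith

/-! ### Volume of sheared boxes -/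

/-- The box of half-sides `a, a, h` around the graph of `g`. -/
def shBox (x y a h : ℝ) (g : ℝ × ℝ → ℝ) : Set (ℝ × ℝ × ℝ) :=
  {q | |q.1 - x| ≤ a ∧ |q.2.1 - y| ≤ a ∧ |q.2.2 - g (q.1, q.2.1)| ≤ h}

lemma volume_shBox {x y a h : ℝ} {g : ℝ × ℝ → ℝ} (hg : Measurable g) (ha : 0 ≤ a) (hh : 0 ≤ h) :
    volume (shBox x y a h g) = ENNReal.ofReal (8 * a ^ 2 * h) := by
  have hI : ∀ u b : ℝ, {v : ℝ | |v - u| ≤ b} = Icc (u - b) (u + b) := fun u b => by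
    ext v; simp only [mem_ofPred_eq, abs_le, mem_Icc]
    constructor <;> rintro ⟨_, _⟩ <;> constructor <;> linarith
  have hm : MeasurableSet (shBox x y a h g) := by
    have e : shBox x y a h g = {q | |q.1 - x| ≤ a} ∩ ({q | |q.2.1 - y| ≤ a} ∩
      {q | |q.2.2 - g (q.1, q.2.1)| ≤ h}) := rfl
    rw [e]
    refine (measurableSet_le (by fun_prop) measurable_const).inter
      ((measurableSet_le (by fun_prop) measurable_const).inter
        (measurableSet_le ?_ measurable_const))
    have : Measurable fun q : ℝ × ℝ × ℝ => q.2.2 - g (q.1, q.2.1) :=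
      (measurable_snd.comp measurable_snd).sub
        (hg.comp (measurable_fst.prodMk (measurable_fst.comp measurable_snd)))
    exact measurable_abs.comp this
  have hsec : ∀ u, volume (Prod.mk u ⁻¹' shBox x y a h g) =
      (Icc (x - a) (x + a)).indicator (fun _ => ENNReal.ofReal (2 * a) * ENNReal.ofReal (2 * h))
        u := by
    intro u
    by_cases hu : u ∈ Icc (x - a) (x + a)
    · have hu' : |u - x| ≤ a := by rw [← hI] at hu; exact hu
      rw [indicator_of_mem hu, Measure.volume_eq_prod,
        Measure.prod_apply (measurable_prodMk_left hm)]
      have : ∀ v, volume (Prod.mk v ⁻¹' (Prod.mk u ⁻¹' shBox x y a h g)) =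
          (Icc (y - a) (y + a)).indicator (fun _ => ENNReal.ofReal (2 * h)) v := by
        intro v
        by_cases hv : v ∈ Icc (y - a) (y + a)
        · have hv' : |v - y| ≤ a := by rw [← hI] at hv; exact hv
          have : Prod.mk v ⁻¹' (Prod.mk u ⁻¹' shBox x y a h g) = {c | |c - g (u, v)| ≤ h} := by
            ext c; simp [shBox, hu', hv']
          rw [indicator_of_mem hv, this, hI, Real.volume_Icc]
          congr 1; ring
        · have hv' : ¬ |v - y| ≤ a := by rw [← hI] at hv; exact hv
          have : Prod.mk v ⁻¹' (Prod.mk u ⁻¹' shBox x y a h g) = ∅ := by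
            ext c; simp [shBox, hv']
          rw [indicator_of_notMem hv, this, measure_empty]
      simp_rw [this]
      rw [lintegral_indicator_const measurableSet_Icc, Real.volume_Icc, mul_comm]
      congr 2; ring
    · have hu' : ¬ |u - x| ≤ a := by rw [← hI] at hu; exact hu
      have : Prod.mk u ⁻¹' shBox x y a h g = ∅ := by
        ext c; simp [shBox, hu']
      rw [indicator_of_notMem hu, this, measure_empty]
  rw [Measure.volume_eq_prod, Measure.prod_apply hm]
  simp_rw [hsec]
  rw [lintegral_indicator_const measurableSet_Icc, Real.volume_Icc,
    ← ENNReal.ofReal_mul (by positivity), ← ENNReal.ofReal_mul (by positivity)]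
  congr 1; ring

/-! ### Boxes containing the ball -/

lemma abs_fst_le_nrm (x y : ℝ) : |x| ≤ nrm (x, y) :=
  Real.abs_le_sqrt (by simpa using sq_nonneg y)

lemma abs_snd_le_nrm (x y : ℝ) : |y| ≤ nrm (x, y) :=
  Real.abs_le_sqrt (by simpa using sq_nonneg x)

lemma ball_volume_le_of_coef {m : ℝ} (hm : 1 ≤ m) {x y t r A B K : ℝ} (hr : 0 < r)
    (hK : 0 ≤ K)
    (hAB : ∀ a b, |a - x| ≤ r → |b - y| ≤ r →
      |w2m m (a, b) * b - A| ≤ K ∧ |w2m m (a, b) * a - B| ≤ K) :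
    volume (ccBall m (x, y, t) r) ≤ ENNReal.ofReal (16 * K * r ^ 3) := by
  have hsub : ccBall m (x, y, t) r ⊆
      shBox x y r (2 * K * r) (fun z => t + (A * (z.1 - x) - B * (z.2 - y))) :=
    fun ⟨x', y', t'⟩ h => mem_box_of_mem_ball hm hr hK hAB h
  refine (measure_mono hsub).trans ?_
  rw [volume_shBox (by fun_prop) hr.le (by positivity)]
  apply le_of_eq
  congr 1; ring

lemma ball_volume_le_large {m : ℝ} (hm : 1 ≤ m) {x y t r : ℝ} (hr : 0 < r)
    (h : 10 * nrm (x, y) ≤ r) :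
    volume (ccBall m (x, y, t) r) ≤ ENNReal.ofReal (32 * (8 * r ^ 2) ^ m * r ^ 4) := by
  refine (ball_volume_le_of_coef hm (A := 0) (B := 0) (K := (8 * r ^ 2) ^ m * (2 * r)) hr
    (by positivity) fun a b ha hb => ?_).trans_eq (by congr 1; ring)
  have h0 := nrm_nonneg (x, y)
  have hx := abs_fst_le_nrm x y
  have hy := abs_snd_le_nrm x y
  have ha2 : |a| ≤ 2 * r := by
    have := abs_sub_abs_le_abs_sub a x; linarith
  have hb2 : |b| ≤ 2 * r := by
    have := abs_sub_abs_le_abs_sub b y; linarith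
  have hS : a ^ 2 + b ^ 2 ≤ 8 * r ^ 2 := by
    have := pow_le_pow_left₀ (abs_nonneg a) ha2 2
    have := pow_le_pow_left₀ (abs_nonneg b) hb2 2
    simp only [sq_abs] at *
    linarith
  have hw : w2m m (a, b) ≤ (8 * r ^ 2) ^ m :=
    Real.rpow_le_rpow (by positivity) hS (by linarith)
  have hw0 : 0 ≤ w2m m (a, b) := Real.rpow_nonneg (by positivity) _
  simp only [sub_zero, abs_mul, abs_of_nonneg hw0]
  exact ⟨by gcongr, by gcongr⟩

/-- Mean value inequality for `S ↦ S ^ m`. -/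
lemma abs_rpow_sub_rpow_le {m : ℝ} (hm : 1 ≤ m) {S S0 M : ℝ} (hS : S ∈ Icc 0 M)
    (hS0 : S0 ∈ Icc 0 M) : |S ^ m - S0 ^ m| ≤ m * M ^ (m - 1) * |S - S0| := by
  have := Convex.norm_image_sub_le_of_norm_hasDerivWithin_le (f := fun x : ℝ => x ^ m)
    (f' := fun x => m * x ^ (m - 1)) (s := Icc 0 M) (C := m * M ^ (m - 1))
    (fun x _ => (Real.hasDerivAt_rpow_const (Or.inr hm)).hasDerivWithinAt)
    (fun x hx => by
      rw [Real.norm_eq_abs, abs_of_nonneg (mul_nonneg (by linarith) (Real.rpow_nonneg hx.1 _))]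
      exact mul_le_mul_of_nonneg_left (Real.rpow_le_rpow hx.1 hx.2 (by linarith)) (by linarith))
    (convex_Icc 0 M) hS0 hS
  simpa [Real.norm_eq_abs] using this

/-- The comparison constant for the coefficients of the fields at scales `r ≤ 10 |z|`. -/
def coefConst (m : ℝ) : ℝ := 264 * m * 242 ^ (m - 1) + 1

lemma coefConst_pos {m : ℝ} (hm : 1 ≤ m) : 0 < coefConst m := by
  have : 0 ≤ m := by linarith
  unfold coefConst; positivity

lemma ball_volume_le_small {m : ℝ} (hm : 1 ≤ m) {x y t r : ℝ} (hr : 0 < r)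
    (h : r ≤ 10 * nrm (x, y)) :
    volume (ccBall m (x, y, t) r) ≤
      ENNReal.ofReal (16 * coefConst m * ((nrm (x, y) ^ 2) ^ m * r ^ 4)) := by
  have hc := coefConst_pos hm
  have hx := abs_fst_le_nrm x y
  have hy := abs_snd_le_nrm x y
  have hsq := nrm_sq (x, y)
  simp only at hsq
  set R := nrm (x, y) with hRdef
  have hR : 0 < R := by linarith
  refine (ball_volume_le_of_coef hm (A := (R ^ 2) ^ m * y) (B := (R ^ 2) ^ m * x)
    (K := coefConst m * (R ^ 2) ^ m * r) hr (by positivity) fun a b ha hb => ?_).trans_eq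
      (by congr 1; ring)
  have ha2 : |a| ≤ 11 * R := by
    have := abs_sub_abs_le_abs_sub a x; linarith
  have hb2 : |b| ≤ 11 * R := by
    have := abs_sub_abs_le_abs_sub b y; linarith
  have hS : a ^ 2 + b ^ 2 ≤ 242 * R ^ 2 := by
    have := pow_le_pow_left₀ (abs_nonneg a) ha2 2
    have := pow_le_pow_left₀ (abs_nonneg b) hb2 2
    simp only [sq_abs] at *
    linarith
  have hd : |a ^ 2 + b ^ 2 - R ^ 2| ≤ 24 * R * r := by
    have e : a ^ 2 + b ^ 2 - R ^ 2 = (a - x) * (a + x) + (b - y) * (b + y) := by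
      rw [hsq]; ring
    have h1 : |a + x| ≤ 12 * R := (abs_add_le a x).trans (by linarith)
    have h2 : |b + y| ≤ 12 * R := (abs_add_le b y).trans (by linarith)
    rw [e]
    refine (abs_add_le _ _).trans ?_
    rw [abs_mul, abs_mul]
    have := mul_le_mul ha h1 (abs_nonneg _) hr.le
    have := mul_le_mul hb h2 (abs_nonneg _) hr.le
    linarith
  have hw : |w2m m (a, b) - (R ^ 2) ^ m| ≤ m * (242 * R ^ 2) ^ (m - 1) * (24 * R * r) := by
    refine (abs_rpow_sub_rpow_le hm (M := 242 * R ^ 2) ⟨by positivity, hS⟩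
      ⟨by positivity, by nlinarith⟩).trans ?_
    have : 0 ≤ m := by linarith
    gcongr
  have hp : (R ^ 2) ^ (m - 1) * R ^ 2 = (R ^ 2) ^ m := by
    rw [← Real.rpow_add_one (by positivity)]; congr 1; ring
  have hmul : (242 * R ^ 2) ^ (m - 1) = 242 ^ (m - 1) * (R ^ 2) ^ (m - 1) :=
    Real.mul_rpow (by norm_num) (by positivity)
  have main : ∀ u v : ℝ, |u| ≤ 11 * R → |u - v| ≤ r →
      |w2m m (a, b) * u - (R ^ 2) ^ m * v| ≤ coefConst m * (R ^ 2) ^ m * r := by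
    intro u v hu huv
    have e : w2m m (a, b) * u - (R ^ 2) ^ m * v =
        (w2m m (a, b) - (R ^ 2) ^ m) * u + (R ^ 2) ^ m * (u - v) := by ring
    have hR0 : 0 ≤ (R ^ 2) ^ m := by positivity
    rw [e]
    refine (abs_add_le _ _).trans ?_
    rw [abs_mul, abs_mul, abs_of_nonneg hR0]
    have h1 := mul_le_mul hw hu (abs_nonneg _) ((abs_nonneg _).trans hw)
    have h2 := mul_le_mul_of_nonneg_left huv hR0
    refine (add_le_add h1 h2).trans_eq ?_
    rw [hmul, ← hp, coefConst]
    ring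
  exact ⟨main b y hb2 hb, main a x ha2 ha⟩

/-! ### Boxes contained in the ball -/

lemma mem_ccBall_of_reach {m : ℝ} {p q : ℝ × ℝ × ℝ} {L r : ℝ} (h : Reach m p q L) (hL : L < r) :
    q ∈ ccBall m p r := (ccDist_le h).trans_lt hL

lemma nrm_le (x y : ℝ) : nrm (x, y) ≤ |x| + |y| := by
  rw [nrm_eq_norm_s18]; exact Complex.norm_le_abs_re_add_abs_im _

lemma le_ball_volume_large {m : ℝ} (hm : 1 ≤ m) {x y t r : ℝ} (hr : 0 < r)
    (h : 10 * nrm (x, y) ≤ r) :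
    ENNReal.ofReal (8 * (r / 100) ^ 2 * ((r / 10) ^ 2) ^ (m + 1)) ≤
      volume (ccBall m (x, y, t) r) := by
  rw [← volume_shBox (x := x) (y := y) (g := fun _ => t) measurable_const (by positivity)
    (by positivity)]
  refine measure_mono ?_
  rintro ⟨a, b, c⟩ ⟨ha, hb, hc⟩
  simp only at ha hb hc
  have key := reach_axis hm (nrm (x, y)) (Complex.arg ⟨x, y⟩) t (nrm (a, b))
    (Complex.arg ⟨a, b⟩) c (ρ := r / 10) (by positivity)
  rw [← eq_pol, ← eq_pol, abs_of_nonneg (nrm_nonneg _), abs_of_nonneg (nrm_nonneg _)] at key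
  refine mem_ccBall_of_reach key ?_
  have h1 : |c - t| / ((r / 10) ^ 2) ^ (m + 1) ≤ 1 := div_le_one_of_le₀ hc (by positivity)
  have h2 := mul_le_mul_of_nonneg_left h1 (show 0 ≤ r / 10 by positivity)
  have h3 := nrm_le a b
  have hx := abs_fst_le_nrm x y
  have hy := abs_snd_le_nrm x y
  have := abs_sub_abs_le_abs_sub a x
  have := abs_sub_abs_le_abs_sub b y
  linarith

/-- Polar coordinates relative to the centre: a point close to `z` is obtained from `z` by a
rotation of angle at most `s / |z|` and a change of modulus of at most `s / 2`. -/
lemma polar_near {x y a b s : ℝ} (hs : 0 < s) (hR : 10 * s ≤ nrm (x, y))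
    (ha : |a - x| ≤ s / 4) (hb : |b - y| ≤ s / 4) (c : ℝ) :
    (a, b, c) = pol (nrm (a, b))
      (Complex.arg ⟨x, y⟩ + Complex.arg ((⟨a, b⟩ : ℂ) / ⟨x, y⟩)) c ∧
    |nrm (a, b) - nrm (x, y)| ≤ s / 2 ∧
    nrm (x, y) * |Complex.arg ((⟨a, b⟩ : ℂ) / ⟨x, y⟩)| ≤ s := by
  rw [nrm_eq_norm_s18] at *
  rw [nrm_eq_norm_s18]
  set Z : ℂ := ⟨x, y⟩ with hZ
  set W : ℂ := ⟨a, b⟩ with hW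
  have hZ0 : 0 < ‖Z‖ := by linarith
  have hZne : Z ≠ 0 := norm_pos_iff.1 hZ0
  have hWZ : ‖W - Z‖ ≤ s / 2 := by
    refine (Complex.norm_le_abs_re_add_abs_im _).trans ?_
    simp only [Complex.sub_re, Complex.sub_im, hZ, hW]
    linarith
  refine ⟨?_, (abs_norm_sub_norm_le W Z).trans hWZ, ?_⟩
  · have e : (‖W‖ : ℂ) * Complex.exp ((Z.arg + (W / Z).arg : ℝ) * Complex.I) = W := by
      have e1 := Complex.norm_mul_exp_arg_mul_I Z
      have e2 := Complex.norm_mul_exp_arg_mul_I (W / Z)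
      have e3 : (‖W‖ : ℂ) = ‖Z‖ * ‖W / Z‖ := by
        rw [← Complex.ofReal_mul, norm_div, mul_div_cancel₀ _ hZ0.ne']
      calc _ = (‖Z‖ * Complex.exp (Z.arg * Complex.I)) *
            (‖W / Z‖ * Complex.exp ((W / Z).arg * Complex.I)) := by
              rw [e3]; push_cast; rw [add_mul, Complex.exp_add]; ring
        _ = W := by rw [e1, e2, mul_div_cancel₀ _ hZne]
    have er := congrArg Complex.re e
    have ei := congrArg Complex.im e
    rw [Complex.re_ofReal_mul, Complex.exp_ofReal_mul_I_re] at er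
    rw [Complex.im_ofReal_mul, Complex.exp_ofReal_mul_I_im] at ei
    rw [pol, er, ei]
  · have e : W / Z = 1 + (W - Z) / Z := by field_simp; ring
    have hu : ‖Z‖ * ‖(W - Z) / Z‖ ≤ s / 2 := by
      rw [norm_div, mul_div_cancel₀ _ hZ0.ne']; exact hWZ
    have hu2 : ‖(W - Z) / Z‖ ≤ 1 / 2 := by
      rw [norm_div, div_le_iff₀ hZ0]; linarith
    have h1 := Complex.norm_log_one_add_half_le_self hu2
    rw [← e] at h1
    have h2 := Complex.abs_im_le_norm (Complex.log (W / Z))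
    rw [Complex.log_im] at h2
    have := mul_le_mul_of_nonneg_left (h2.trans h1) hZ0.le
    linarith

lemma le_ball_volume_small {m : ℝ} (hm : 1 ≤ m) {x y t r : ℝ} (hr : 0 < r)
    (h : r ≤ 10 * nrm (x, y)) :
    ENNReal.ofReal (8 * (r / 400) ^ 2 * ((nrm (x, y) ^ 2) ^ m * (r / 100) ^ 2)) ≤
      volume (ccBall m (x, y, t) r) := by
  set R := nrm (x, y) with hRdef
  set s := r / 100 with hsdef
  have hs : 0 < s := by positivity
  have hsR : 10 * s ≤ R := by linarith
  have hR : 0 < R := by linarith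
  set g : ℝ × ℝ → ℝ := fun z =>
    t - (R ^ 2) ^ (m + 1) * Complex.arg ((⟨z.1, z.2⟩ : ℂ) / ⟨x, y⟩) with hg
  have hgm : Measurable g := by
    have : Measurable fun z : ℝ × ℝ => (⟨z.1, z.2⟩ : ℂ) :=
      Complex.measurableEquivRealProd.symm.measurable
    exact measurable_const.sub (measurable_const.mul
      (Complex.measurable_arg.comp (this.div_const _)))
  have e4 : r / 400 = s / 4 := by rw [hsdef]; ring
  rw [e4, ← volume_shBox (x := x) (y := y) hgm (by positivity) (by positivity)]
  refine measure_mono ?_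
  rintro ⟨a, b, c⟩ ⟨ha, hb, hc⟩
  simp only [hg] at ha hb hc
  obtain ⟨e, hR', hΔ⟩ := polar_near hs hsR ha hb c
  set Δ := Complex.arg ((⟨a, b⟩ : ℂ) / ⟨x, y⟩)
  obtain ⟨β, hβ, key⟩ := reach_annulus hm hR hs (Complex.arg ⟨x, y⟩) t (nrm (a, b)) Δ c
  rw [← e, hRdef, ← eq_pol, ← hRdef] at key
  refine mem_ccBall_of_reach key ?_
  have hβR : R * |β| ≤ s / 2 := by
    have hP : 0 < (R ^ 2) ^ m * s := by positivity
    have h1 : ((R ^ 2) ^ m * s) * (R * |β|) ≤ ((R ^ 2) ^ m * s) * (s / 2) := by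
      have := hβ.trans hc
      linarith
    exact le_of_mul_le_mul_left h1 hP
  have h1 : R * |Δ - β| ≤ R * |Δ| + R * |β| := by
    rw [← mul_add]; exact mul_le_mul_of_nonneg_left (abs_sub _ _) hR.le
  have h2 : s * |β| ≤ R * |β| := mul_le_mul_of_nonneg_right (by linarith) (abs_nonneg _)
  have h3 : |nrm (a, b) - (R + s)| ≤ s / 2 + s := by
    have : nrm (a, b) - (R + s) = (nrm (a, b) - R) - s := by ring
    rw [this]
    refine (abs_sub _ _).trans ?_
    rw [abs_of_pos hs]
    linarith
  have hrs : r = 100 * s := by rw [hsdef]; ring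
  linarith [add_mul R s |β|]

/-! ### The volume estimate -/

/-- Volume of CC balls: `|B(p,r)| ≃ |z|^(2m) r⁴` if `r ≤ ε₀|z|`, and
`|B(p,r)| ≃ r^(2m+4)` if `r ≥ ε₀|z|`. -/
theorem stmt18 (m : ℝ) (hm : 1 ≤ m) :
    ∃ c : ℝ, 0 < c ∧ ∃ ε₀ : ℝ, 0 < ε₀ ∧ ∀ x y t r : ℝ, 0 < r →
      (r ≤ ε₀ * nrm (x, y) →
        ENNReal.ofReal (c⁻¹ * (nrm (x, y) ^ (2 * m) * r ^ (4 : ℝ))) ≤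
            volume (ccBall m (x, y, t) r) ∧
        volume (ccBall m (x, y, t) r) ≤
            ENNReal.ofReal (c * (nrm (x, y) ^ (2 * m) * r ^ (4 : ℝ)))) ∧
      (ε₀ * nrm (x, y) ≤ r →
        ENNReal.ofReal (c⁻¹ * r ^ (2 * m + 4)) ≤ volume (ccBall m (x, y, t) r) ∧
        volume (ccBall m (x, y, t) r) ≤ ENNReal.ofReal (c * r ^ (2 * m + 4))) := by
  -- `U`, `V` are the constants of the upper bounds, `l`, `k` those of the lower bounds; `l` and
  -- `U` belong to `r ≥ 10 |z|`, the other two to `r ≤ 10 |z|`.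
  obtain ⟨U, hU⟩ : ∃ U, U = 32 * (8 : ℝ) ^ m := ⟨_, rfl⟩
  obtain ⟨l, hl⟩ : ∃ l, l = 8 / 10000 * (1 / 100 : ℝ) ^ (m + 1) := ⟨_, rfl⟩
  obtain ⟨V, hV⟩ : ∃ V, V = 16 * coefConst m := ⟨_, rfl⟩
  obtain ⟨k, hk⟩ : ∃ k, k = 8 / 400 ^ 2 / (100 : ℝ) ^ 2 := ⟨_, rfl⟩
  have hU0 : 0 < U := by rw [hU]; positivity
  have hl0 : 0 < l := by rw [hl]; positivity
  have hV0 : 0 < V := by rw [hV]; have := coefConst_pos hm; positivity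
  have hk0 : 0 < k := by rw [hk]; positivity
  have hl1 : 0 < l⁻¹ := by positivity
  have hk1 : 0 < k⁻¹ := by positivity
  have hcl : (U + V + l⁻¹ + k⁻¹)⁻¹ ≤ l := inv_le_of_inv_le₀ hl0 (by linarith)
  have hck : (U + V + l⁻¹ + k⁻¹)⁻¹ ≤ k := inv_le_of_inv_le₀ hk0 (by linarith)
  refine ⟨U + V + l⁻¹ + k⁻¹, by positivity, 10, by norm_num, fun x y t r hr => ?_⟩
  have hn := nrm_nonneg (x, y)
  have p4 : r ^ (4 : ℝ) = r ^ 4 := by exact_mod_cast Real.rpow_natCast r 4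
  have p2 : ∀ u e : ℝ, 0 ≤ u → u ^ (2 * e) = (u ^ 2) ^ e := fun u e hu => by
    rw [Real.rpow_mul hu, Real.rpow_two]
  rw [p4, p2 _ m hn, Real.rpow_add hr, p4, p2 _ m hr.le]
  refine ⟨fun h => ⟨?_, ?_⟩, fun h => ⟨?_, ?_⟩⟩
  · refine (ENNReal.ofReal_le_ofReal ?_).trans (le_ball_volume_small hm hr h)
    calc _ ≤ k * ((nrm (x, y) ^ 2) ^ m * r ^ 4) := by gcongr
      _ = _ := by rw [hk]; ring
  · refine (ball_volume_le_small hm hr h).trans (ENNReal.ofReal_le_ofReal ?_)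
    rw [← hV]
    gcongr
    linarith
  · refine (ENNReal.ofReal_le_ofReal ?_).trans (le_ball_volume_large hm hr h)
    calc _ ≤ l * ((r ^ 2) ^ m * r ^ 4) := by gcongr
      _ = _ := by
        have e : (r / 10) ^ 2 = 1 / 100 * r ^ 2 := by ring
        rw [hl, e, Real.mul_rpow (by norm_num) (by positivity),
          Real.rpow_add_one (x := r ^ 2) (by positivity)]
        ring
  · refine (ball_volume_le_large hm hr h).trans (ENNReal.ofReal_le_ofReal ?_)
    rw [Real.mul_rpow (by norm_num) (by positivity), ← mul_assoc 32, ← hU, mul_assoc]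
    gcongr
    linarith
end
end
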